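/- arXiv:2605.21438 — 2 statements merged into one kernel-verified Lean document; each statement's English description precedes it below -/
import Mathlib

section
/- Let d > 2 be an integer, J an admissible kernel on ℤ^d, and G ∈ 𝒢 with (J,G) satisfying Assumption G. Let 0 ≤ β' ≤ β < β_c. If E(β) ≤ max{ (1/4)·χ(β')/χ(β), (1/4)·(ξ(β')/ξ(β))² } and E(β) ≤ 1/2, then (1/2)·χ(β')/χ(β) ≤ (ξ(β')/ξ(β))² ≤ 2·χ(β')/χ(β). -/
open scoped ENNReal

noncomputable section

namespace Blackbox

/-- Supremum norm of a lattice point. -/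
def supNorm {d : ℕ} (x : Fin d → ℤ) : ℝ :=
  ((Finset.univ.sup fun i => (x i).natAbs : ℕ) : ℝ)

/-- Squared Euclidean norm of a lattice point. -/
def sqNorm {d : ℕ} (x : Fin d → ℤ) : ℝ :=
  ∑ i, ((x i : ℝ)) ^ 2

/-- Invariance under coordinate permutations and sign flips of individual coordinates. -/
def IsSymmFun {d : ℕ} {α : Type*} (f : (Fin d → ℤ) → α) : Prop :=
  ∀ (π : Equiv.Perm (Fin d)) (e : Fin d → Bool) (x : Fin d → ℤ),
    f (fun i => (if e i then -1 else 1) * x (π i)) = f x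

/-- First coordinate (dot product with `e₁`). -/
def e1 {d : ℕ} {α : Type*} [Zero α] (y : Fin d → α) : α :=
  if h : 0 < d then y ⟨0, h⟩ else 0

/-- An admissible kernel on `ℤ^d` with constant `c₀`. -/
structure AdmissibleKernel (d : ℕ) (c₀ : ℝ) where
  J : (Fin d → ℤ) → ℝ
  nonneg : ∀ x, 0 ≤ J x
  zero_at_zero : J 0 = 0
  summable : Summable J
  norm_one : ∑' x, J x = 1
  symm : IsSymmFun J
  R : ℝ
  R_ge_one : 1 ≤ R
  range_le : ∀ x, 0 < J x → supNorm x ≤ R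
  range_attained : ∃ x, 0 < J x ∧ supNorm x = R
  summable_sq : Summable fun x => sqNorm x * J x
  sigma_lower : c₀ * R ≤ Real.sqrt (∑' x, sqNorm x * J x)
  J_upper : ∀ x, J x ≤ c₀⁻¹ / R ^ d

/-- `σ_J`, the square root of the variance of the kernel. -/
def AdmissibleKernel.sigma {d : ℕ} {c₀ : ℝ} (K : AdmissibleKernel d c₀) : ℝ :=
  Real.sqrt (∑' x, sqNorm x * K.J x)

/-- A family `G ∈ 𝒢` together with an admissible kernel `J` such that `(J,G)` satisfies
Assumption G (with error-term family `H`). -/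
structure Model (d : ℕ) (c₀ : ℝ) where
  K : AdmissibleKernel d c₀
  G : ℝ → (Fin d → ℤ) → ℝ≥0∞
  βc : ℝ≥0∞
  βc_pos : 0 < βc
  init : ∀ x, G 0 x = if x = 0 then 1 else 0
  G' : ℝ → (Fin d → ℤ) → ℝ
  mono : ∀ (x : Fin d → ℤ) ⦃β₁ β₂ : ℝ⦄, 0 ≤ β₁ → β₁ ≤ β₂ →
    ENNReal.ofReal β₂ ≤ βc → G β₁ x ≤ G β₂ x
  deriv : ∀ (x : Fin d → ℤ) ⦃β : ℝ⦄, 0 ≤ β → ENNReal.ofReal β < βc →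
    HasDerivWithinAt (fun t => (G t x).toReal) (G' β x) (Set.Ici 0) β
  symm : ∀ β, IsSymmFun (G β)
  expDecay : ∀ ⦃β : ℝ⦄, 0 ≤ β → ENNReal.ofReal β < βc →
    ∃ C > (0:ℝ), ∃ c > (0:ℝ), ∀ x, G β x ≤ ENNReal.ofReal (C * Real.exp (-c * supNorm x))
  limit : βc ≠ ⊤ → ∀ x, G βc.toReal x = ⨆ β ∈ Set.Ico (0 : ℝ) βc.toReal, G β x
  I1 : ∀ ⦃β' β : ℝ⦄, 0 ≤ β' → β' ≤ β → ENNReal.ofReal β < βc →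
    ∀ x, G β x ≤ G β' x + ENNReal.ofReal (β - β') *
      ∑' p : (Fin d → ℤ) × (Fin d → ℤ),
        G β' p.1 * ENNReal.ofReal (K.J p.2) * G β (x - p.1 - p.2)
  H : ℝ → (Fin d → ℤ) → ℝ
  H_nonneg : ∀ β x, 0 ≤ H β x
  H_zero : ∀ x, H 0 x = 0
  H_symm : ∀ β x, H β (-x) = H β x
  H_cont : ∀ x, ContinuousOn (fun β => H β x)
    {β : ℝ | 0 ≤ β ∧ ENNReal.ofReal β < βc}
  H_expDecay : ∀ ⦃β : ℝ⦄, 0 ≤ β → ENNReal.ofReal β < βc →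
    ∃ C > (0:ℝ), ∃ c > (0:ℝ), ∀ x, H β x ≤ C * Real.exp (-c * supNorm x)
  I2 : ∀ ⦃β : ℝ⦄, 0 ≤ β → ENNReal.ofReal β < βc → ∀ x,
    (∑' p : (Fin d → ℤ) × (Fin d → ℤ),
      (G β p.1).toReal * (K.J p.2 - H β p.2) * (G β (x - p.1 - p.2)).toReal)
      ≤ G' β x

namespace Model

variable {d : ℕ} {c₀ : ℝ}

def sigma (M : Model d c₀) : ℝ := M.K.sigma

/-- `F_β = J * G_β`. -/
def F (M : Model d c₀) (β : ℝ) (x : Fin d → ℤ) : ℝ≥0∞ :=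
  ∑' y, ENNReal.ofReal (M.K.J y) * M.G β (x - y)

/-- The susceptibility `χ(β)`. -/
def chi (M : Model d c₀) (β : ℝ) : ℝ≥0∞ := ∑' x, M.G β x

/-- `ξ(β)²`. -/
def xiSq (M : Model d c₀) (β : ℝ) : ℝ≥0∞ :=
  (∑' x, ENNReal.ofReal (sqNorm x) * M.F β x) / M.chi β

/-- The correlation length of order two, `ξ(β)`. -/
def xi (M : Model d c₀) (β : ℝ) : ℝ := Real.sqrt (M.xiSq β).toReal

/-- The error term `E(β)`. -/
def E (M : Model d c₀) (β : ℝ) : ℝ≥0∞ :=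
  ⨆ t ∈ Set.Icc (0 : ℝ) β,
    (ENNReal.ofReal (∑' x, M.H t x) +
      ENNReal.ofReal (∑' x, sqNorm x * M.H t x) / M.xiSq t)

/-- `β(δ)`. -/
def betaOf (M : Model d c₀) (δ : ℝ) : ℝ :=
  sSup {β : ℝ | 0 ≤ β ∧ ENNReal.ofReal β < M.βc ∧ M.E β < ENNReal.ofReal δ}

/-- One-step distribution of the effective random walk at parameter `β`. -/
def effStep (M : Model d c₀) (β : ℝ) (y : Fin d → ℤ) : ℝ≥0∞ :=
  M.F β y / M.chi β

/-- `k`-step distribution of the effective random walk at parameter `β`. -/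
def effIter (M : Model d c₀) (β : ℝ) : ℕ → (Fin d → ℤ) → ℝ≥0∞
  | 0 => fun x => if x = 0 then 1 else 0
  | n + 1 => fun x => ∑' y, M.effStep β y * M.effIter β n (x - y)

/-- Moment generating function `M_β(s)` of the first coordinate of one step of the
effective random walk. -/
def Mgf (M : Model d c₀) (β s : ℝ) : ℝ≥0∞ :=
  ∑' y : Fin d → ℤ, M.effStep β y * ENNReal.ofReal (Real.exp (s / M.xi β * ((e1 y : ℤ) : ℝ)))

end Model

end Blackbox
open Blackbox

open scoped ENNReal
open Blackbox

namespace Aux14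

variable {d : ℕ}

def q (x : Fin d → ℤ) : ℝ≥0∞ := ENNReal.ofReal (sqNorm x)
def m0 (f : (Fin d → ℤ) → ℝ≥0∞) : ℝ≥0∞ := ∑' x, f x
def m2 (f : (Fin d → ℤ) → ℝ≥0∞) : ℝ≥0∞ := ∑' x, q x * f x
def c2 (f g : (Fin d → ℤ) → ℝ≥0∞) (x : Fin d → ℤ) : ℝ≥0∞ := ∑' y, f y * g (x - y)
def c3 (f g h : (Fin d → ℤ) → ℝ≥0∞) (x : Fin d → ℤ) : ℝ≥0∞ :=
  ∑' p : (Fin d → ℤ) × (Fin d → ℤ), f p.1 * g p.2 * h (x - p.1 - p.2)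

lemma sqNorm_nonneg (x : Fin d → ℤ) : 0 ≤ sqNorm x :=
  Finset.sum_nonneg fun _ _ => sq_nonneg _

lemma sqNorm_par (x y : Fin d → ℤ) :
    sqNorm (x + y) + sqNorm (x - y) = 2 * (sqNorm x + sqNorm y) := by
  unfold sqNorm
  rw [← Finset.sum_add_distrib, ← Finset.sum_add_distrib, Finset.mul_sum]
  refine Finset.sum_congr rfl fun i _ => ?_
  simp only [Pi.add_apply, Pi.sub_apply, Int.cast_add, Int.cast_sub]
  ring

lemma q_par (x y : Fin d → ℤ) : q (x + y) + q (x - y) = 2 * (q x + q y) := by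
  unfold q
  rw [← ENNReal.ofReal_add (sqNorm_nonneg _) (sqNorm_nonneg _), sqNorm_par,
    ENNReal.ofReal_mul (by norm_num), ENNReal.ofReal_add (sqNorm_nonneg _) (sqNorm_nonneg _)]
  simp

lemma q_neg (x : Fin d → ℤ) : q (-x) = q x := by
  unfold q sqNorm; simp

lemma c3_eq (f g h : (Fin d → ℤ) → ℝ≥0∞) (x) : c3 f g h x = c2 f (c2 g h) x := by
  unfold c3 c2
  rw [ENNReal.tsum_prod (f := fun a b => f a * g b * h (x - a - b))]
  refine tsum_congr fun y => ?_
  rw [← ENNReal.tsum_mul_left]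
  refine tsum_congr fun z => ?_
  rw [mul_assoc]

lemma wsum_c2 (w f g : (Fin d → ℤ) → ℝ≥0∞) :
    ∑' x, w x * c2 f g x = ∑' y, ∑' z, w (z + y) * (f y * g z) := by
  unfold c2
  simp_rw [← ENNReal.tsum_mul_left]
  rw [ENNReal.tsum_comm]
  refine tsum_congr fun y => ?_
  rw [← (Equiv.addRight y).tsum_eq]
  simp

lemma m0_c2 (f g : (Fin d → ℤ) → ℝ≥0∞) : m0 (c2 f g) = m0 f * m0 g := by
  have := wsum_c2 (fun _ => 1) f g
  simp only [one_mul] at this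
  unfold m0
  rw [this]
  simp_rw [ENNReal.tsum_mul_left, ENNReal.tsum_mul_right]

lemma m2_c2 (f g : (Fin d → ℤ) → ℝ≥0∞) (hf : ∀ x, f (-x) = f x) :
    m2 (c2 f g) = m2 f * m0 g + m0 f * m2 g := by
  have h1 : m2 (c2 f g) = ∑' y, ∑' z, q (z + y) * (f y * g z) := wsum_c2 q f g
  have h2 : m2 (c2 f g) = ∑' y, ∑' z, q (z - y) * (f y * g z) := by
    rw [h1, ← (Equiv.neg (Fin d → ℤ)).tsum_eq]
    simp [hf, sub_eq_add_neg]
  have h3 : 2 * m2 (c2 f g) = 2 * (m2 f * m0 g + m0 f * m2 g) := by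
    rw [two_mul]
    nth_rw 1 [h1]
    rw [h2, ← ENNReal.tsum_add]
    simp_rw [← ENNReal.tsum_add, ← add_mul, q_par]
    have : ∀ y z : Fin d → ℤ, 2 * (q z + q y) * (f y * g z)
        = 2 * (f y * (q z * g z) + (q y * f y) * g z) := fun y z => by ring
    simp_rw [this, ENNReal.tsum_mul_left, ENNReal.tsum_add, ENNReal.tsum_mul_left,
      ENNReal.tsum_mul_right]
    unfold m0 m2
    rw [add_comm]
  exact (ENNReal.mul_right_inj (by norm_num) (by norm_num)).1 h3

lemma m0_c3 (f g h : (Fin d → ℤ) → ℝ≥0∞) : m0 (c3 f g h) = m0 f * (m0 g * m0 h) := by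
  have : c3 f g h = c2 f (c2 g h) := funext (c3_eq f g h)
  rw [this, m0_c2, m0_c2]

lemma m2_c3 (f g h : (Fin d → ℤ) → ℝ≥0∞) (hf : ∀ x, f (-x) = f x) (hg : ∀ x, g (-x) = g x) :
    m2 (c3 f g h) = m2 f * (m0 g * m0 h) + m0 f * (m2 g * m0 h + m0 g * m2 h) := by
  have : c3 f g h = c2 f (c2 g h) := funext (c3_eq f g h)
  rw [this, m2_c2 _ _ hf, m0_c2, m2_c2 _ _ hg]

lemma even_of_symm {f : (Fin d → ℤ) → ℝ≥0∞} (hf : IsSymmFun f) (x) : f (-x) = f x := by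
  have := hf 1 (fun _ => true) x
  rw [← this]; congr 1; ext i; simp

lemma even_of_symm_real {f : (Fin d → ℤ) → ℝ} (hf : IsSymmFun f) (x) : f (-x) = f x := by
  have := hf 1 (fun _ => true) x
  rw [← this]; congr 1; ext i; simp

/-! decay -/

lemma tsum_prod_fun (f : ℤ → ℝ≥0∞) (n : ℕ) :
    ∑' x : Fin n → ℤ, ∏ i, f (x i) = (∑' k, f k) ^ n := by
  induction n with
  | zero => simp [tsum_fintype]
  | succ n ih =>
    rw [← (Fin.consEquiv (fun _ : Fin (n+1) => ℤ)).tsum_eq,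
      ENNReal.tsum_prod (f := fun a b => ∏ i, f ((Fin.consEquiv fun x => ℤ) (a, b) i)),
      pow_succ', ← ih]
    simp [Fin.prod_univ_succ, Fin.consEquiv, ENNReal.tsum_mul_left, ENNReal.tsum_mul_right]

lemma supNorm_nonneg (x : Fin d → ℤ) : 0 ≤ supNorm x := Nat.cast_nonneg _

lemma abs_le_supNorm (x : Fin d → ℤ) (i : Fin d) : |(x i : ℝ)| ≤ supNorm x := by
  unfold supNorm
  have h : (x i).natAbs ≤ Finset.univ.sup fun i => (x i).natAbs :=
    Finset.le_sup (f := fun i => (x i).natAbs) (Finset.mem_univ i)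
  have h2 : |(x i : ℝ)| = ((x i).natAbs : ℝ) := by
    rw [Nat.cast_natAbs]; simp
  rw [h2]; exact_mod_cast h

lemma sqNorm_le (x : Fin d → ℤ) : sqNorm x ≤ d * supNorm x ^ 2 := by
  unfold sqNorm
  calc _ ≤ ∑ i : Fin d, supNorm x ^ 2 := by
        refine Finset.sum_le_sum fun i _ => ?_
        rw [← sq_abs]
        exact pow_le_pow_left₀ (abs_nonneg _) (abs_le_supNorm x i) 2
    _ = _ := by simp

lemma int_exp_finite {c : ℝ} (hc : 0 < c) :
    ∑' k : ℤ, ENNReal.ofReal (Real.exp (-c * |(k:ℝ)|)) ≠ ∞ := by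
  have hs : Summable fun k : ℤ => Real.exp (-c * |(k:ℝ)|) := by
    have hn : Summable fun n : ℕ => Real.exp (-c * n) := by
      have := Real.summable_exp_nat_mul_of_ge (c := -c) (by linarith) (f := fun n => n) (by simp)
      simpa using this
    refine Summable.of_nat_of_neg ?_ ?_
    · simpa using hn
    · simpa using hn
  exact hs.tsum_ofReal_ne_top

lemma exp_finite {c : ℝ} (hc : 0 < c) :
    ∑' x : Fin d → ℤ, ENNReal.ofReal (Real.exp (-c * supNorm x)) ≠ ∞ := by
  have hd : (0:ℝ) < d + 1 := by positivity
  have hle : ∀ x : Fin d → ℤ, ENNReal.ofReal (Real.exp (-c * supNorm x))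
      ≤ ∏ i, ENNReal.ofReal (Real.exp (-(c/(d+1)) * |(x i : ℝ)|)) := by
    intro x
    rw [← ENNReal.ofReal_prod_of_nonneg (fun i _ => (Real.exp_pos _).le), ← Real.exp_sum]
    refine ENNReal.ofReal_le_ofReal (Real.exp_le_exp.2 ?_)
    rw [← Finset.mul_sum]
    have h1 : ∑ i, |(x i : ℝ)| ≤ (d+1) * supNorm x := by
      calc _ ≤ ∑ i : Fin d, supNorm x := Finset.sum_le_sum fun i _ => abs_le_supNorm x i
        _ = d * supNorm x := by simp
        _ ≤ _ := by nlinarith [supNorm_nonneg x]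
    have h2 : c/(d+1) * ∑ i, |(x i : ℝ)| ≤ c/(d+1) * ((d+1) * supNorm x) :=
      mul_le_mul_of_nonneg_left h1 (by positivity)
    have h3 : c/(d+1) * ((d+1) * supNorm x) = c * supNorm x := by field_simp
    linarith
  refine ne_top_of_le_ne_top ?_ (ENNReal.tsum_le_tsum hle)
  rw [tsum_prod_fun (fun k : ℤ => ENNReal.ofReal (Real.exp (-(c/(d+1)) * |(k : ℝ)|)))]
  exact ENNReal.pow_ne_top (int_exp_finite (by positivity))

lemma decay_m0 {f : (Fin d → ℤ) → ℝ≥0∞} {C c : ℝ} (hC : 0 < C) (hc : 0 < c)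
    (hf : ∀ x, f x ≤ ENNReal.ofReal (C * Real.exp (-c * supNorm x))) : m0 f ≠ ∞ := by
  refine ne_top_of_le_ne_top ?_ (ENNReal.tsum_le_tsum hf)
  simp_rw [ENNReal.ofReal_mul hC.le, ENNReal.tsum_mul_left]
  exact ENNReal.mul_ne_top (by simp) (exp_finite hc)

lemma decay_m2 {f : (Fin d → ℤ) → ℝ≥0∞} {C c : ℝ} (hC : 0 < C) (hc : 0 < c)
    (hf : ∀ x, f x ≤ ENNReal.ofReal (C * Real.exp (-c * supNorm x))) : m2 f ≠ ∞ := by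
  have hle : ∀ x, q x * f x ≤
      ENNReal.ofReal (((d+1) * (16/c^2) * C) * Real.exp (-(c/2) * supNorm x)) := by
    intro x
    refine (mul_le_mul_right (hf x) _).trans ?_
    unfold q
    rw [← ENNReal.ofReal_mul (sqNorm_nonneg x)]
    refine ENNReal.ofReal_le_ofReal ?_
    have h1 := sqNorm_le x
    have hs := supNorm_nonneg x
    have h2 : c/4 * supNorm x ≤ Real.exp (c/4 * supNorm x) := by
      linarith [Real.add_one_le_exp (c/4 * supNorm x)]
    have h3 : (c/4 * supNorm x)^2 ≤ Real.exp (c/2 * supNorm x) := by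
      calc _ ≤ (Real.exp (c/4 * supNorm x))^2 := pow_le_pow_left₀ (by positivity) h2 2
        _ = _ := by rw [← Real.exp_nat_mul]; congr 1; push_cast; ring
    have h4 : supNorm x ^ 2 ≤ 16/c^2 * Real.exp (c/2 * supNorm x) := by
      calc supNorm x ^ 2 = 16/c^2 * (c/4 * supNorm x)^2 := by field_simp; ring
        _ ≤ _ := mul_le_mul_of_nonneg_left h3 (by positivity)
    have h5 : sqNorm x ≤ (d+1) * (16/c^2 * Real.exp (c/2 * supNorm x)) := by
      refine h1.trans (mul_le_mul (by linarith) h4 (by positivity) (by positivity))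
    calc _ ≤ (d+1) * (16/c^2 * Real.exp (c/2 * supNorm x)) * (C * Real.exp (-c * supNorm x)) :=
          mul_le_mul_of_nonneg_right h5 (by positivity)
      _ = (d+1) * (16/c^2) * C * (Real.exp (c/2 * supNorm x) * Real.exp (-c * supNorm x)) := by ring
      _ = _ := by rw [← Real.exp_add]; congr 2; ring
  refine decay_m0 (f := fun x => q x * f x) (by positivity) (half_pos hc) hle

end Aux14

namespace Aux14
open Filter Topology Set

/-- lower right Dini derivative at least `c`. -/
def LD (f : ℝ → ℝ) (t c : ℝ) : Prop :=
  ∀ r < c, ∀ᶠ s in 𝓝[>] t, r * (s - t) ≤ f s - f t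

lemma LD.add {f g : ℝ → ℝ} {t c e : ℝ} (hf : LD f t c) (hg : LD g t e) :
    LD (fun s => f s + g s) t (c + e) := by
  intro r hr
  have h1 := hf (c - (c + e - r)/2) (by linarith)
  have h2 := hg (e - (c + e - r)/2) (by linarith)
  filter_upwards [h1, h2] with s a b
  linarith

lemma LD.smul {f : ℝ → ℝ} {t c k : ℝ} (hf : LD f t c) (hk : 0 < k) :
    LD (fun s => k * f s) t (k * c) := by
  intro r hr
  have h1 := hf (r / k) (by rw [div_lt_iff₀ hk]; linarith)
  filter_upwards [h1] with s a
  have := mul_le_mul_of_nonneg_left a hk.le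
  have h : k * (r / k * (s - t)) = r * (s - t) := by field_simp
  linarith

lemma LD.mono {f : ℝ → ℝ} {t c e : ℝ} (hf : LD f t c) (h : e ≤ c) : LD f t e :=
  fun r hr => hf r (hr.trans_le h)

lemma LD.log {f : ℝ → ℝ} {t c : ℝ} (hf : LD f t c) (hc : Tendsto f (𝓝[>] t) (𝓝 (f t)))
    (h0 : 0 < f t) : LD (fun s => Real.log (f s)) t (c / f t) := by
  intro r hr
  have hr' : r * f t < c := by rwa [lt_div_iff₀ h0] at hr
  obtain ⟨r', h1, h2⟩ := exists_between hr'
  have e1 : ∀ᶠ s in 𝓝[>] t, r * f s < r' := (hc.const_mul r).eventually_lt_const h1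
  have e2 : ∀ᶠ s in 𝓝[>] t, 0 < f s := hc.eventually_const_lt h0
  filter_upwards [e1, e2, hf r' h2, self_mem_nhdsWithin] with s a b c' hs
  have hs : 0 < s - t := sub_pos.2 hs
  have h3 : 1 - (f s / f t)⁻¹ ≤ Real.log (f s / f t) :=
    Real.one_sub_inv_le_log_of_pos (div_pos b h0)
  rw [Real.log_div b.ne' h0.ne', inv_div] at h3
  refine le_trans ?_ h3
  rw [one_sub_div b.ne', le_div_iff₀ b]
  nlinarith

lemma LD_neg_log {f Q : ℝ → ℝ} {t b c : ℝ} (hb : t < b)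
    (hf : ∀ s ∈ Ioc t b, f s - f t ≤ (s - t) * Q s) (hpos : ∀ s ∈ Ioc t b, 0 < f s)
    (hQ : Tendsto Q (𝓝[>] t) (𝓝 c))
    (h0 : 0 < f t) : LD (fun s => - Real.log (f s)) t (- (c / f t)) := by
  intro r hr
  have hr' : c < - r * f t := by
    have : c / f t < -r := by linarith
    rwa [div_lt_iff₀ h0] at this
  filter_upwards [hQ.eventually_lt_const hr', Ioc_mem_nhdsGT hb] with s a hs
  have b := hpos s hs
  have hst : 0 < s - t := sub_pos.2 hs.1
  have h3 : Real.log (f s / f t) ≤ f s / f t - 1 :=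
    Real.log_le_sub_one_of_pos (div_pos b h0)
  rw [Real.log_div b.ne' h0.ne'] at h3
  have h4 : f s / f t - 1 ≤ - r * (s - t) := by
    rw [div_sub_one h0.ne', div_le_iff₀ h0]
    nlinarith [hf s hs]
  linarith

lemma le_of_LD {f : ℝ → ℝ} {a b : ℝ} (hab : a ≤ b) (hf : ContinuousOn f (Icc a b))
    (h : ∀ t ∈ Ico a b, LD f t 0) : f a ≤ f b := by
  have := image_le_of_liminf_slope_right_le_deriv_boundary (f := fun s => - f s) (a := a) (b := b)
    hf.neg (B := fun _ => - f a) (B' := fun _ => 0) le_rfl continuousOn_const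
    (fun x _ => hasDerivWithinAt_const _ _ _) ?_ (right_mem_Icc.2 hab)
  · simpa using this
  · intro x hx r hr
    refine Eventually.frequently ?_
    filter_upwards [h x hx (-(r/2)) (by linarith), self_mem_nhdsWithin] with s hs h1
    have h1 : 0 < s - x := sub_pos.2 h1
    rw [slope_def_field, div_lt_iff₀ h1]
    nlinarith

lemma cont_of_lip {X : ℝ → ℝ} {a b L : ℝ}
    (mono : ∀ s t, a ≤ s → s ≤ t → t ≤ b → X s ≤ X t)
    (h : ∀ s t, a ≤ s → s ≤ t → t ≤ b → X t - X s ≤ (t - s) * L) :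
    ContinuousOn X (Icc a b) := by
  have : LipschitzOnWith (Real.toNNReal L) X (Icc a b) := by
    refine LipschitzOnWith.of_le_add_mul _ ?_
    intro x hx y hy
    have hL : L ≤ Real.toNNReal L := Real.le_coe_toNNReal L
    rcases le_total x y with hxy | hxy
    · have := mono x y hx.1 hxy hy.2
      have : 0 ≤ (Real.toNNReal L : ℝ) * dist x y := by positivity
      linarith
    · have h1 := h y x hy.1 hxy hx.2
      rw [Real.dist_eq, abs_of_nonneg (sub_nonneg.2 hxy)]
      nlinarith
  exact this.continuousOn

lemma core {X S : ℝ → ℝ} {a b E : ℝ} (hab : a ≤ b) (hE : E ≤ 1/2)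
    (hX : ∀ t ∈ Icc a b, 0 < X t) (hS : ∀ t ∈ Icc a b, 0 < S t)
    (mX : ∀ s t, a ≤ s → s ≤ t → t ≤ b → X s ≤ X t)
    (mS : ∀ s t, a ≤ s → s ≤ t → t ≤ b → S s ≤ S t)
    (uX : ∀ s t, a ≤ s → s ≤ t → t ≤ b → X t - X s ≤ (t - s) * (X s * X t))
    (uS : ∀ s t, a ≤ s → s ≤ t → t ≤ b → S t - S s ≤ (t - s) * (S s * X t + X s * S t))
    (lX : ∀ t ∈ Ico a b, LD X t ((1 - E) * X t ^ 2))
    (lS : ∀ t ∈ Ico a b, LD S t (2 * (1 - E) * (X t * S t))) :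
    2 * (1 - E) * (Real.log (X b) - Real.log (X a)) ≤ Real.log (S b) - Real.log (S a) ∧
    (1 - E) * (Real.log (S b) - Real.log (S a)) ≤ 2 * (Real.log (X b) - Real.log (X a)) := by
  have cX : ContinuousOn X (Icc a b) := by
    refine cont_of_lip (L := X b * X b) mX fun s t h1 h2 h3 => (uX s t h1 h2 h3).trans ?_
    refine mul_le_mul_of_nonneg_left ?_ (sub_nonneg.2 h2)
    exact mul_le_mul (mX s b h1 (h2.trans h3) le_rfl) (mX t b (h1.trans h2) h3 le_rfl)
      (hX t ⟨h1.trans h2, h3⟩).le (hX b ⟨hab, le_rfl⟩).le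
  have cS : ContinuousOn S (Icc a b) := by
    refine cont_of_lip (L := S b * X b + X b * S b) mS fun s t h1 h2 h3 => (uS s t h1 h2 h3).trans ?_
    refine mul_le_mul_of_nonneg_left ?_ (sub_nonneg.2 h2)
    refine add_le_add ?_ ?_
    · exact mul_le_mul (mS s b h1 (h2.trans h3) le_rfl) (mX t b (h1.trans h2) h3 le_rfl)
        (hX t ⟨h1.trans h2, h3⟩).le (hS b ⟨hab, le_rfl⟩).le
    · exact mul_le_mul (mX s b h1 (h2.trans h3) le_rfl) (mS t b (h1.trans h2) h3 le_rfl)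
        (hS t ⟨h1.trans h2, h3⟩).le (hX b ⟨hab, le_rfl⟩).le
  have right : ∀ {f : ℝ → ℝ}, ContinuousOn f (Icc a b) → ∀ t ∈ Ico a b,
      Tendsto f (𝓝[>] t) (𝓝 (f t)) := by
    intro f hf t ht
    have h1 := hf t ⟨ht.1, ht.2.le⟩
    refine h1.mono_left ?_
    rw [← nhdsWithin_Ioc_eq_nhdsGT ht.2]
    exact nhdsWithin_mono _ fun s hs => ⟨ht.1.trans hs.1.le, hs.2⟩
  have clX : ContinuousOn (fun t => Real.log (X t)) (Icc a b) :=
    cX.log fun t ht => (hX t ht).ne'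
  have clS : ContinuousOn (fun t => Real.log (S t)) (Icc a b) :=
    cS.log fun t ht => (hS t ht).ne'
  have A1 : ∀ t ∈ Ico a b, LD (fun s => Real.log (X s)) t ((1 - E) * X t) := by
    intro t ht
    have hp := hX t ⟨ht.1, ht.2.le⟩
    refine ((lX t ht).log (right cX t ht) hp).mono (le_of_eq ?_)
    field_simp
  have A2 : ∀ t ∈ Ico a b, LD (fun s => Real.log (S s)) t (2 * (1 - E) * X t) := by
    intro t ht
    have hp := hS t ⟨ht.1, ht.2.le⟩
    refine ((lS t ht).log (right cS t ht) hp).mono (le_of_eq ?_)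
    field_simp
  have A3 : ∀ t ∈ Ico a b, LD (fun s => - Real.log (X s)) t (- X t) := by
    intro t ht
    have hp := hX t ⟨ht.1, ht.2.le⟩
    refine (LD_neg_log (Q := fun s => X t * X s) (c := X t * X t) ht.2
      (fun s hs => uX t s ht.1 hs.1.le hs.2)
      (fun s hs => hX s ⟨ht.1.trans hs.1.le, hs.2⟩) ((right cX t ht).const_mul _) hp).mono
      (le_of_eq ?_)
    field_simp
  have A4 : ∀ t ∈ Ico a b, LD (fun s => - Real.log (S s)) t (- (2 * X t)) := by
    intro t ht
    have hp := hS t ⟨ht.1, ht.2.le⟩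
    refine (LD_neg_log (Q := fun s => S t * X s + X t * S s) (c := S t * X t + X t * S t) ht.2
      (fun s hs => uS t s ht.1 hs.1.le hs.2)
      (fun s hs => hS s ⟨ht.1.trans hs.1.le, hs.2⟩)
      (((right cX t ht).const_mul _).add ((right cS t ht).const_mul _)) hp).mono
      (le_of_eq ?_)
    field_simp; ring
  constructor
  · have := le_of_LD (f := fun s => Real.log (S s) + 2 * (1 - E) * (- Real.log (X s))) hab
      (clS.add (continuousOn_const.mul clX.neg)) (fun t ht =>
        ((A2 t ht).add ((A3 t ht).smul (k := 2 * (1 - E)) (by linarith))).mono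
          (le_of_eq (by ring)))
    linarith
  · have := le_of_LD (f := fun s => 2 * Real.log (X s) + (1 - E) * (- Real.log (S s))) hab
      ((continuousOn_const.mul clX).add (continuousOn_const.mul clS.neg)) (fun t ht =>
        (((A1 t ht).smul (k := 2) (by norm_num)).add ((A4 t ht).smul (k := 1 - E)
          (by linarith))).mono (le_of_eq (by ring)))
    linarith

lemma exp_bound (a : ℝ) : a * Real.exp (-a) ≤ 0.37 := by
  have h1 : a ≤ Real.exp (a - 1) := by linarith [Real.add_one_le_exp (a - 1)]
  have h2 : a * Real.exp (-a) ≤ Real.exp (a - 1) * Real.exp (-a) :=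
    mul_le_mul_of_nonneg_right h1 (Real.exp_pos _).le
  rw [← Real.exp_add] at h2
  have h3 : a - 1 + -a = -1 := by ring
  rw [h3] at h2
  have h4 := Real.exp_neg_one_lt_d9
  norm_num at h4 ⊢
  linarith

/-- final numerics: `x = log χ ratio`, `y = log ξ² ratio`. -/
lemma numerics {x y E : ℝ} (hx : 0 ≤ x) (hE0 : 0 ≤ E) (hE : E ≤ 1/2)
    (h1 : 2 * (1 - E) * x ≤ y + x) (h2 : (1 - E) * (y + x) ≤ 2 * x)
    (h : E ≤ Real.exp (-x) / 4 ∨ E ≤ Real.exp (-y) / 4) :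
    x - y ≤ Real.log 2 ∧ y - x ≤ Real.log 2 := by
  have hl := Real.log_two_gt_d9
  have hb : x - y ≤ 2 * (E * x) := by nlinarith
  have hc : (1 - E) * (y - x) ≤ 2 * (E * x) := by nlinarith
  have hEx : 0 ≤ E * x := mul_nonneg hE0 hx
  rcases h with h | h
  · have e : E * x ≤ 0.37 / 4 := by
      have := mul_le_mul_of_nonneg_right h hx
      have := exp_bound x
      linarith
    norm_num at e hl
    constructor
    · linarith
    · by_contra hcon
      push Not at hcon
      nlinarith
  · have hy : 0 ≤ y := by nlinarith
    have h4 : E ≤ 1/4 := by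
      have : Real.exp (-y) ≤ 1 := Real.exp_le_one_iff.2 (by linarith)
      linarith
    have hxy : x ≤ 2 * y := by nlinarith
    have e : E * y ≤ 0.37 / 4 := by
      have := mul_le_mul_of_nonneg_right h hy
      have := exp_bound y
      linarith
    have e2 : E * x ≤ 2 * (E * y) := by nlinarith
    norm_num at e hl
    constructor
    · linarith
    · by_contra hcon
      push Not at hcon
      nlinarith

end Aux14

namespace Aux14
open Filter Topology Set

set_option linter.unusedSectionVars false

variable {d : ℕ} {c₀ : ℝ} (M : Model d c₀)

def jj (x : Fin d → ℤ) : ℝ≥0∞ := ENNReal.ofReal (M.K.J x)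
def hh (t : ℝ) (x : Fin d → ℤ) : ℝ≥0∞ := ENNReal.ofReal (M.H t x)

lemma m0_jj : m0 (jj M) = 1 := by
  unfold m0 jj
  rw [← ENNReal.ofReal_tsum_of_nonneg M.K.nonneg M.K.summable, M.K.norm_one, ENNReal.ofReal_one]

lemma m2_jj : m2 (jj M) = ENNReal.ofReal (∑' x, sqNorm x * M.K.J x) := by
  unfold m2 jj q
  rw [ENNReal.ofReal_tsum_of_nonneg (fun x => mul_nonneg (sqNorm_nonneg x) (M.K.nonneg x))
    M.K.summable_sq]
  exact tsum_congr fun x => (ENNReal.ofReal_mul (sqNorm_nonneg x)).symm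

lemma m2_jj_ne_top : m2 (jj M) ≠ ∞ := by rw [m2_jj]; simp

lemma m2_jj_pos (hc : 0 < c₀) : 0 < (m2 (jj M)).toReal := by
  have h1 : 0 < c₀ * M.K.R := mul_pos hc (by linarith [M.K.R_ge_one])
  have h2 := Real.sqrt_pos.1 (h1.trans_le M.K.sigma_lower)
  rw [m2_jj, ENNReal.toReal_ofReal h2.le]; exact h2

lemma jj_even (x) : jj M (-x) = jj M x := by
  unfold jj; rw [even_of_symm_real M.K.symm]

lemma G_even (t : ℝ) (x) : M.G t (-x) = M.G t x := even_of_symm (M.symm t) x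

lemma hh_even (t : ℝ) (x) : hh M t (-x) = hh M t x := by unfold hh; rw [M.H_symm]

section fin
variable {t : ℝ} (h0 : 0 ≤ t) (h1 : ENNReal.ofReal t < M.βc)
include h0 h1

lemma m0_G : m0 (M.G t) ≠ ∞ := by
  obtain ⟨C, hC, c, hc, h⟩ := M.expDecay h0 h1
  exact decay_m0 hC hc h

lemma m2_G : m2 (M.G t) ≠ ∞ := by
  obtain ⟨C, hC, c, hc, h⟩ := M.expDecay h0 h1
  exact decay_m2 hC hc h

lemma m0_hh : m0 (hh M t) ≠ ∞ := by
  obtain ⟨C, hC, c, hc, h⟩ := M.H_expDecay h0 h1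
  exact decay_m0 hC hc fun x => ENNReal.ofReal_le_ofReal (h x)

lemma m2_hh : m2 (hh M t) ≠ ∞ := by
  obtain ⟨C, hC, c, hc, h⟩ := M.H_expDecay h0 h1
  exact decay_m2 hC hc fun x => ENNReal.ofReal_le_ofReal (h x)

lemma m0_hh_eq : ∑' x, M.H t x = (m0 (hh M t)).toReal := by
  unfold m0
  rw [ENNReal.tsum_toReal_eq (fun x => by simp [hh])]
  exact tsum_congr fun x => (ENNReal.toReal_ofReal (M.H_nonneg t x)).symm

lemma m2_hh_eq : ∑' x, sqNorm x * M.H t x = (m2 (hh M t)).toReal := by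
  unfold m2
  rw [ENNReal.tsum_toReal_eq (fun x => by simp [hh, q, ENNReal.mul_ne_top])]
  refine tsum_congr fun x => ?_
  rw [ENNReal.toReal_mul, hh, q, ENNReal.toReal_ofReal (M.H_nonneg t x),
    ENNReal.toReal_ofReal (sqNorm_nonneg x)]

lemma chi_ge : 1 ≤ M.chi t := by
  have e : M.G 0 0 = 1 := by rw [M.init]; simp
  calc 1 = M.G 0 0 := e.symm
    _ ≤ M.G t 0 := M.mono 0 le_rfl h0 h1.le
    _ ≤ _ := ENNReal.le_tsum 0

lemma m2_F : m2 (M.F t) = m2 (jj M) * M.chi t + m2 (M.G t) := by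
  have : M.F t = c2 (jj M) (M.G t) := rfl
  rw [this, m2_c2 _ _ (jj_even M), m0_jj, one_mul]; rfl

end fin

/-- weighted sums -/
def Ph (w : (Fin d → ℤ) → ℝ≥0∞) (t : ℝ) : ℝ≥0∞ := ∑' x, w x * M.G t x

lemma Ph_one : Ph M (fun _ => 1) = M.chi := by
  funext t; simp [Ph, Model.chi]

lemma wsum_add (k : ℝ≥0∞) (f : (Fin d → ℤ) → ℝ≥0∞) :
    ∑' x, (q x + k) * f x = m2 f + k * m0 f := by
  simp_rw [add_mul, ENNReal.tsum_add, ENNReal.tsum_mul_left]; rfl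

lemma Ph_two {t : ℝ} (h0 : 0 ≤ t) (h1 : ENNReal.ofReal t < M.βc) :
    Ph M (fun x => q x + m2 (jj M)) t = m2 (M.F t) := by
  rw [m2_F M h0 h1, Ph, wsum_add, add_comm]; rfl

lemma c3_ne_top {f g h : (Fin d → ℤ) → ℝ≥0∞} (hf : m0 f ≠ ∞) (hg : m0 g ≠ ∞) (hh : m0 h ≠ ∞)
    (x) : c3 f g h x ≠ ∞ := by
  have h1 : m0 (c3 f g h) ≠ ∞ := by
    rw [m0_c3]; exact ENNReal.mul_ne_top hf (ENNReal.mul_ne_top hg hh)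
  exact ne_top_of_le_ne_top h1 (ENNReal.le_tsum x)

lemma I2' {t : ℝ} (h0 : 0 ≤ t) (h1 : ENNReal.ofReal t < M.βc) (x) :
    (c3 (M.G t) (jj M) (M.G t) x).toReal - (c3 (M.G t) (hh M t) (M.G t) x).toReal
      ≤ M.G' t x := by
  refine le_trans (le_of_eq ?_) (M.I2 h0 h1 x)
  have hJ := c3_ne_top (m0_G M h0 h1) (by rw [m0_jj]; simp : m0 (jj M) ≠ ∞) (m0_G M h0 h1) x
  have hH := c3_ne_top (m0_G M h0 h1) (m0_hh M h0 h1) (m0_G M h0 h1) x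
  have sJ := ENNReal.summable_toReal hJ
  have sH := ENNReal.summable_toReal hH
  unfold c3
  rw [ENNReal.tsum_toReal_eq (ENNReal.ne_top_of_tsum_ne_top hJ),
    ENNReal.tsum_toReal_eq (ENNReal.ne_top_of_tsum_ne_top hH), ← sJ.tsum_sub sH]
  refine tsum_congr fun p => ?_
  simp only [ENNReal.toReal_mul, jj, hh, ENNReal.toReal_ofReal (M.K.nonneg _),
    ENNReal.toReal_ofReal (M.H_nonneg _ _)]
  ring

lemma lower (w : (Fin d → ℤ) → ℝ≥0∞) (hw : ∀ x, w x ≠ ∞)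
    (hP : ∀ s, 0 ≤ s → ENNReal.ofReal s < M.βc → Ph M w s ≠ ∞)
    {t : ℝ} (h0 : 0 ≤ t) (h1 : ENNReal.ofReal t < M.βc)
    (hA : ∑' x, w x * c3 (M.G t) (jj M) (M.G t) x ≠ ∞)
    (hB : ∑' x, w x * c3 (M.G t) (hh M t) (M.G t) x ≠ ∞) :
    LD (fun s => (Ph M w s).toReal) t
      ((∑' x, w x * c3 (M.G t) (jj M) (M.G t) x).toReal
        - (∑' x, w x * c3 (M.G t) (hh M t) (M.G t) x).toReal) := by
  intro r hr
  have sA := (ENNReal.summable_toReal hA).hasSum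
  have sB := (ENNReal.summable_toReal hB).hasSum
  rw [← ENNReal.tsum_toReal_eq (ENNReal.ne_top_of_tsum_ne_top hA)] at sA
  rw [← ENNReal.tsum_toReal_eq (ENNReal.ne_top_of_tsum_ne_top hB)] at sB
  have sAB := sA.sub sB
  obtain ⟨A, hAr⟩ := (Tendsto.eventually_const_lt hr sAB).exists
  have hder : HasDerivWithinAt (fun s => ∑ x ∈ A, (w x).toReal * (M.G s x).toReal)
      (∑ x ∈ A, (w x).toReal * M.G' t x) (Ici 0) t := by
    exact HasDerivWithinAt.fun_sum fun x _ => (M.deriv x h0 h1).const_mul _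
  have hr2 : r < ∑ x ∈ A, (w x).toReal * M.G' t x := by
    refine hAr.trans_le (Finset.sum_le_sum fun x _ => ?_)
    rw [ENNReal.toReal_mul, ENNReal.toReal_mul, ← mul_sub]
    exact mul_le_mul_of_nonneg_left (I2' M h0 h1 x) ENNReal.toReal_nonneg
  have hsl := (hasDerivWithinAt_iff_tendsto_slope.1 hder).mono_left
    (nhdsWithin_mono t (s := Ioi t) fun s hs => ⟨h0.trans (le_of_lt hs), ne_of_gt hs⟩)
  have hop : ∀ᶠ s in 𝓝[>] t, ENNReal.ofReal s < M.βc :=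
    (ENNReal.continuous_ofReal.tendsto t).eventually_lt_const h1 |>.filter_mono nhdsWithin_le_nhds
  filter_upwards [hsl.eventually_const_lt hr2, hop, self_mem_nhdsWithin] with s hs1 hs2 hs3
  have hs3 : t < s := hs3
  rw [slope_def_field, lt_div_iff₀ (sub_pos.2 hs3)] at hs1
  refine hs1.le.trans ?_
  have hs0 := h0.trans hs3.le
  have ft := hP t h0 h1
  have fs := hP s hs0 hs2
  have st := ENNReal.summable_toReal ft
  have ss := ENNReal.summable_toReal fs
  have key := (ss.sub st).sum_le_tsum A (fun x _ => sub_nonneg.2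
    (ENNReal.toReal_mono (ENNReal.ne_top_of_tsum_ne_top fs x)
      (mul_le_mul_right (M.mono x h0 hs3.le hs2.le) _)))
  rw [ss.tsum_sub st, ← ENNReal.tsum_toReal_eq (ENNReal.ne_top_of_tsum_ne_top fs),
    ← ENNReal.tsum_toReal_eq (ENNReal.ne_top_of_tsum_ne_top ft)] at key
  refine le_trans (le_of_eq ?_) key
  simp [ENNReal.toReal_mul]

lemma upper (w : (Fin d → ℤ) → ℝ≥0∞) {s t : ℝ} (h0 : 0 ≤ s) (hst : s ≤ t)
    (h1 : ENNReal.ofReal t < M.βc) :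
    Ph M w t ≤ Ph M w s
      + ENNReal.ofReal (t - s) * ∑' x, w x * c3 (M.G s) (jj M) (M.G t) x := by
  unfold Ph
  rw [← ENNReal.tsum_mul_left, ← ENNReal.tsum_add]
  refine ENNReal.tsum_le_tsum fun x => ?_
  refine (mul_le_mul_right (M.I1 h0 hst h1 x) _).trans (le_of_eq ?_)
  rw [mul_add, mul_left_comm]; rfl

lemma Ph_mono (w : (Fin d → ℤ) → ℝ≥0∞) {s t : ℝ} (h0 : 0 ≤ s) (hst : s ≤ t)
    (h1 : ENNReal.ofReal t < M.βc) : Ph M w s ≤ Ph M w t :=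
  ENNReal.tsum_le_tsum fun x => mul_le_mul_right (M.mono x h0 hst h1.le) _

def XX (t : ℝ) : ℝ := (M.chi t).toReal
def SS (t : ℝ) : ℝ := (m2 (M.F t)).toReal

section two
variable {t : ℝ} (h0 : 0 ≤ t) (h1 : ENNReal.ofReal t < M.βc)
include h0 h1

lemma chi_ne_top : M.chi t ≠ ∞ := m0_G M h0 h1

lemma F_ne_top : m2 (M.F t) ≠ ∞ := by
  rw [m2_F M h0 h1]
  exact ENNReal.add_ne_top.2 ⟨ENNReal.mul_ne_top (m2_jj_ne_top M) (chi_ne_top M h0 h1),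
    m2_G M h0 h1⟩

lemma XX_pos : 0 < XX M t :=
  ENNReal.toReal_pos (by have := chi_ge M h0 h1; intro h; simp [h] at this) (chi_ne_top M h0 h1)

lemma SS_eq : SS M t = (m2 (jj M)).toReal * XX M t + (m2 (M.G t)).toReal := by
  unfold SS
  rw [m2_F M h0 h1, ENNReal.toReal_add (ENNReal.mul_ne_top (m2_jj_ne_top M) (chi_ne_top M h0 h1))
    (m2_G M h0 h1), ENNReal.toReal_mul]; rfl

lemma SS_pos (hc : 0 < c₀) : 0 < SS M t := by
  rw [SS_eq M h0 h1]
  have := mul_pos (m2_jj_pos M hc) (XX_pos M h0 h1)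
  have : 0 ≤ (m2 (M.G t)).toReal := ENNReal.toReal_nonneg
  linarith

lemma xiSq_toReal : (M.xiSq t).toReal = SS M t / XX M t := by
  have : M.xiSq t = m2 (M.F t) / M.chi t := rfl
  rw [this, ENNReal.toReal_div]; rfl

lemma lowerX : LD (XX M) t ((1 - (m0 (hh M t)).toReal) * XX M t ^ 2) := by
  have hA : m0 (c3 (M.G t) (jj M) (M.G t)) ≠ ∞ := by
    rw [m0_c3, m0_jj]
    exact ENNReal.mul_ne_top (m0_G M h0 h1) (ENNReal.mul_ne_top (by simp) (m0_G M h0 h1))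
  have hB : m0 (c3 (M.G t) (hh M t) (M.G t)) ≠ ∞ := by
    rw [m0_c3]
    exact ENNReal.mul_ne_top (m0_G M h0 h1) (ENNReal.mul_ne_top (m0_hh M h0 h1) (m0_G M h0 h1))
  have h := lower M (fun _ => 1) (by simp) (fun s a b => by rw [Ph_one]; exact chi_ne_top M a b)
    h0 h1 (by simpa [m0] using hA) (by simpa [m0] using hB)
  rw [Ph_one] at h
  simp only [one_mul] at h
  change LD (XX M) t ((m0 (c3 (M.G t) (jj M) (M.G t))).toReal -
    (m0 (c3 (M.G t) (hh M t) (M.G t))).toReal) at h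
  rw [m0_c3, m0_c3, m0_jj] at h
  simp only [ENNReal.toReal_mul, ENNReal.toReal_one] at h
  refine h.mono (le_of_eq ?_)
  change _ = XX M t * (1 * XX M t) - XX M t * (_ * XX M t)
  ring

lemma lowerS : LD (SS M) t (2 * (1 - (m0 (hh M t)).toReal) * (XX M t * SS M t)
    - XX M t ^ 2 * (m2 (hh M t)).toReal) := by
  have f0 := m0_G M h0 h1
  have f2 := m2_G M h0 h1
  have k0 := m0_hh M h0 h1
  have k2 := m2_hh M h0 h1
  have j2 := m2_jj_ne_top M
  have mt := fun {a b : ℝ≥0∞} => ENNReal.mul_ne_top (a := a) (b := b)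
  have at' := fun {a b : ℝ≥0∞} (ha : a ≠ ∞) (hb : b ≠ ∞) => ENNReal.add_ne_top.2 ⟨ha, hb⟩
  have eA : ∑' x, (q x + m2 (jj M)) * c3 (M.G t) (jj M) (M.G t) x
      = m2 (M.G t) * m0 (M.G t) + m0 (M.G t) * (m2 (jj M) * m0 (M.G t) + m2 (M.G t))
        + m2 (jj M) * (m0 (M.G t) * m0 (M.G t)) := by
    rw [wsum_add, m2_c3 _ _ _ (G_even M t) (jj_even M), m0_c3, m0_jj, one_mul, one_mul]
  have eB : ∑' x, (q x + m2 (jj M)) * c3 (M.G t) (hh M t) (M.G t) x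
      = m2 (M.G t) * (m0 (hh M t) * m0 (M.G t))
        + m0 (M.G t) * (m2 (hh M t) * m0 (M.G t) + m0 (hh M t) * m2 (M.G t))
        + m2 (jj M) * (m0 (M.G t) * (m0 (hh M t) * m0 (M.G t))) := by
    rw [wsum_add, m2_c3 _ _ _ (G_even M t) (hh_even M t), m0_c3]
  have h := lower M (fun x => q x + m2 (jj M)) (fun x => at' (by simp [q]) j2)
    (fun s a b => by rw [Ph_two M a b]; exact F_ne_top M a b) h0 h1
    (by rw [eA]; exact at' (at' (mt f2 f0) (mt f0 (at' (mt j2 f0) f2))) (mt j2 (mt f0 f0)))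
    (by rw [eB]; exact at' (at' (mt f2 (mt k0 f0)) (mt f0 (at' (mt k2 f0) (mt k0 f2))))
          (mt j2 (mt f0 (mt k0 f0))))
  rw [eA, eB] at h
  rw [ENNReal.toReal_add (at' (mt f2 f0) (mt f0 (at' (mt j2 f0) f2))) (mt j2 (mt f0 f0)),
    ENNReal.toReal_add (mt f2 f0) (mt f0 (at' (mt j2 f0) f2)), ENNReal.toReal_mul,
    ENNReal.toReal_mul (a := m0 (M.G t)), ENNReal.toReal_add (mt j2 f0) f2,
    ENNReal.toReal_add (at' (mt f2 (mt k0 f0)) (mt f0 (at' (mt k2 f0) (mt k0 f2))))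
      (mt j2 (mt f0 (mt k0 f0))),
    ENNReal.toReal_add (mt f2 (mt k0 f0)) (mt f0 (at' (mt k2 f0) (mt k0 f2))),
    ENNReal.toReal_mul (a := m0 (M.G t)) (b := m2 (hh M t) * m0 (M.G t) + _),
    ENNReal.toReal_add (mt k2 f0) (mt k0 f2)] at h
  simp only [ENNReal.toReal_mul] at h
  have hX : (m0 (M.G t)).toReal = XX M t := rfl
  rw [hX] at h
  intro r hr
  have hr' := h r (hr.trans_le ?_)
  · have hop : ∀ᶠ s in 𝓝[>] t, ENNReal.ofReal s < M.βc :=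
      (ENNReal.continuous_ofReal.tendsto t).eventually_lt_const h1 |>.filter_mono
        nhdsWithin_le_nhds
    filter_upwards [hr', hop, self_mem_nhdsWithin] with s a b c
    rw [Ph_two M h0 h1, Ph_two M (h0.trans (le_of_lt c)) b] at a
    exact a
  · rw [SS_eq M h0 h1]
    have p1 : 0 ≤ (m2 (jj M)).toReal * XX M t ^ 2 * (m0 (hh M t)).toReal := by
      refine mul_nonneg (mul_nonneg ENNReal.toReal_nonneg (sq_nonneg _)) ENNReal.toReal_nonneg
    nlinarith

end two

lemma upperX {s t : ℝ} (h0 : 0 ≤ s) (hst : s ≤ t) (h1 : ENNReal.ofReal t < M.βc) :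
    XX M t - XX M s ≤ (t - s) * (XX M s * XX M t) := by
  have hs1 : ENNReal.ofReal s < M.βc := (ENNReal.ofReal_le_ofReal hst).trans_lt h1
  have h := upper M (fun _ => 1) h0 hst h1
  rw [Ph_one] at h
  simp only [one_mul] at h
  have e : ∑' x, c3 (M.G s) (jj M) (M.G t) x = M.chi s * M.chi t := by
    have := m0_c3 (M.G s) (jj M) (M.G t)
    rw [m0_jj, one_mul] at this; exact this
  rw [e] at h
  have fs := chi_ne_top M h0 hs1
  have ft := chi_ne_top M (h0.trans hst) h1
  have h2 := ENNReal.toReal_mono (ENNReal.add_ne_top.2 ⟨fs, ENNReal.mul_ne_top (by simp)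
    (ENNReal.mul_ne_top fs ft)⟩) h
  rw [ENNReal.toReal_add fs (ENNReal.mul_ne_top (by simp) (ENNReal.mul_ne_top fs ft)),
    ENNReal.toReal_mul, ENNReal.toReal_mul, ENNReal.toReal_ofReal (sub_nonneg.2 hst)] at h2
  unfold XX
  linarith

lemma upperS {s t : ℝ} (h0 : 0 ≤ s) (hst : s ≤ t) (h1 : ENNReal.ofReal t < M.βc) :
    SS M t - SS M s ≤ (t - s) * (SS M s * XX M t + XX M s * SS M t) := by
  have hs1 : ENNReal.ofReal s < M.βc := (ENNReal.ofReal_le_ofReal hst).trans_lt h1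
  have ht0 := h0.trans hst
  have h := upper M (fun x => q x + m2 (jj M)) h0 hst h1
  rw [Ph_two M h0 hs1, Ph_two M ht0 h1] at h
  have e : ∑' x, (q x + m2 (jj M)) * c3 (M.G s) (jj M) (M.G t) x
      = m2 (M.F s) * M.chi t + M.chi s * m2 (M.F t) := by
    rw [wsum_add, m2_c3 _ _ _ (G_even M s) (jj_even M), m0_c3, m0_jj, one_mul, one_mul,
      m2_F M h0 hs1, m2_F M ht0 h1]
    change _ = (m2 (jj M) * m0 (M.G s) + m2 (M.G s)) * m0 (M.G t)
      + m0 (M.G s) * (m2 (jj M) * m0 (M.G t) + m2 (M.G t))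
    ring
  rw [e] at h
  have fs := chi_ne_top M h0 hs1
  have ft := chi_ne_top M ht0 h1
  have gs := F_ne_top M h0 hs1
  have gt := F_ne_top M ht0 h1
  have a1 := ENNReal.mul_ne_top gs ft
  have a2 := ENNReal.mul_ne_top fs gt
  have a3 := ENNReal.mul_ne_top (ENNReal.ofReal_ne_top (r := t - s)) (ENNReal.add_ne_top.2 ⟨a1, a2⟩)
  have h2 := ENNReal.toReal_mono (ENNReal.add_ne_top.2 ⟨gs, a3⟩) h
  rw [ENNReal.toReal_add gs a3, ENNReal.toReal_mul, ENNReal.toReal_add a1 a2,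
    ENNReal.toReal_mul, ENNReal.toReal_mul, ENNReal.toReal_ofReal (sub_nonneg.2 hst)] at h2
  unfold XX SS
  linarith

lemma monoX {s t : ℝ} (h0 : 0 ≤ s) (hst : s ≤ t) (h1 : ENNReal.ofReal t < M.βc) :
    XX M s ≤ XX M t := by
  have h := Ph_mono M (fun _ => 1) h0 hst h1
  rw [Ph_one] at h
  exact ENNReal.toReal_mono (chi_ne_top M (h0.trans hst) h1) h

lemma monoS {s t : ℝ} (h0 : 0 ≤ s) (hst : s ≤ t) (h1 : ENNReal.ofReal t < M.βc) :
    SS M s ≤ SS M t := by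
  have hs1 : ENNReal.ofReal s < M.βc := (ENNReal.ofReal_le_ofReal hst).trans_lt h1
  have h := Ph_mono M (fun x => q x + m2 (jj M)) h0 hst h1
  rw [Ph_two M h0 hs1, Ph_two M (h0.trans hst) h1] at h
  exact ENNReal.toReal_mono (F_ne_top M (h0.trans hst) h1) h

lemma E_bound (hc : 0 < c₀) {t β : ℝ} (h0 : 0 ≤ t) (htβ : t ≤ β) (h1 : ENNReal.ofReal β < M.βc)
    (hE : M.E β ≠ ∞) :
    (m0 (hh M t)).toReal + (m2 (hh M t)).toReal * XX M t / SS M t ≤ (M.E β).toReal := by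
  have ht1 : ENNReal.ofReal t < M.βc := (ENNReal.ofReal_le_ofReal htβ).trans_lt h1
  have h : ENNReal.ofReal (∑' x, M.H t x) +
      ENNReal.ofReal (∑' x, sqNorm x * M.H t x) / M.xiSq t ≤ M.E β := by
    unfold Model.E
    exact le_iSup₂_of_le (f := fun t (_ : t ∈ Set.Icc (0 : ℝ) β) =>
      (ENNReal.ofReal (∑' x, M.H t x) +
        ENNReal.ofReal (∑' x, sqNorm x * M.H t x) / M.xiSq t)) t ⟨h0, htβ⟩ le_rfl
  have hfin := ne_top_of_le_ne_top hE h
  have h2 := ENNReal.toReal_mono hE h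
  rw [ENNReal.toReal_add (ENNReal.add_ne_top.1 hfin).1 (ENNReal.add_ne_top.1 hfin).2,
    ENNReal.toReal_div, xiSq_toReal M h0 ht1, m0_hh_eq M h0 ht1, m2_hh_eq M h0 ht1,
    ENNReal.toReal_ofReal ENNReal.toReal_nonneg, ENNReal.toReal_ofReal ENNReal.toReal_nonneg,
    div_div_eq_mul_div] at h2
  exact h2

end Aux14

/-- comparability of `χ` and `ξ²` ratios when `E` is small
(`cor: comparison chi xi when E small`). -/
theorem statement14 (d : ℕ) (hd : 2 < d) (c₀ : ℝ) (hc₀ : c₀ ∈ Set.Ioc (0:ℝ) 1)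
    (M : Model d c₀) (β' β : ℝ) (hβ'0 : 0 ≤ β') (hβ'β : β' ≤ β)
    (hβ : ENNReal.ofReal β < M.βc)
    (hE1 : M.E β ≤ max (M.chi β' / M.chi β / 4)
      (ENNReal.ofReal ((M.xi β' / M.xi β) ^ 2) / 4))
    (hE2 : M.E β ≤ 1/2) :
    M.chi β' / M.chi β / 2 ≤ ENNReal.ofReal ((M.xi β' / M.xi β) ^ 2) ∧
      ENNReal.ofReal ((M.xi β' / M.xi β) ^ 2) ≤ 2 * (M.chi β' / M.chi β) := by
  open Aux14 in
  have hc := hc₀.1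
  have hβ0 := hβ'0.trans hβ'β
  have hβ' : ENNReal.ofReal β' < M.βc := (ENNReal.ofReal_le_ofReal hβ'β).trans_lt hβ
  have hEt : M.E β ≠ ∞ := ne_top_of_le_ne_top (by simp) hE2
  have hEr : (M.E β).toReal ≤ 1/2 := by
    have := ENNReal.toReal_mono (by simp) hE2
    simpa using this
  have lt : ∀ {t}, t ≤ β → ENNReal.ofReal t < M.βc := fun h =>
    (ENNReal.ofReal_le_ofReal h).trans_lt hβ
  have pX := XX_pos M hβ0 hβ
  have pX' := XX_pos M hβ'0 hβ'
  have pS := SS_pos M hβ0 hβ hc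
  have pS' := SS_pos M hβ'0 hβ' hc
  have key := core (X := XX M) (S := SS M) (a := β') (b := β) (E := (M.E β).toReal) hβ'β hEr
    (fun t ht => XX_pos M (hβ'0.trans ht.1) (lt ht.2))
    (fun t ht => SS_pos M (hβ'0.trans ht.1) (lt ht.2) hc)
    (fun s t a b c => monoX M (hβ'0.trans a) b (lt c))
    (fun s t a b c => monoS M (hβ'0.trans a) b (lt c))
    (fun s t a b c => upperX M (hβ'0.trans a) b (lt c))
    (fun s t a b c => upperS M (hβ'0.trans a) b (lt c))
    (fun t ht => by
      have h0 := hβ'0.trans ht.1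
      have h1 := lt ht.2.le
      refine (lowerX M h0 h1).mono ?_
      have := E_bound M hc h0 ht.2.le hβ hEt
      have x1 := XX_pos M h0 h1
      have x2 := SS_pos M h0 h1 hc
      have : 0 ≤ (m2 (hh M t)).toReal * XX M t / SS M t :=
        div_nonneg (mul_nonneg ENNReal.toReal_nonneg x1.le) x2.le
      exact mul_le_mul_of_nonneg_right (by linarith) (sq_nonneg _))
    (fun t ht => by
      have h0 := hβ'0.trans ht.1
      have h1 := lt ht.2.le
      refine (lowerS M h0 h1).mono ?_
      have hb := E_bound M hc h0 ht.2.le hβ hEt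
      have x1 := XX_pos M h0 h1
      have x2 := SS_pos M h0 h1 hc
      have p : 0 ≤ (m2 (hh M t)).toReal * XX M t / SS M t :=
        div_nonneg (mul_nonneg ENNReal.toReal_nonneg x1.le) x2.le
      have e : XX M t ^ 2 * (m2 (hh M t)).toReal
          = (m2 (hh M t)).toReal * XX M t / SS M t * (XX M t * SS M t) := by
        field_simp
      rw [e]
      have xs := mul_pos x1 x2
      nlinarith)
  -- reduce to reals
  have hxi : (M.xi β' / M.xi β) ^ 2 = (SS M β' / XX M β') / (SS M β / XX M β) := by
    unfold Model.xi
    rw [div_pow, Real.sq_sqrt ENNReal.toReal_nonneg, Real.sq_sqrt ENNReal.toReal_nonneg,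
      xiSq_toReal M hβ'0 hβ', xiSq_toReal M hβ0 hβ]
  have hchi : M.chi β' / M.chi β = ENNReal.ofReal (XX M β' / XX M β) := by
    rw [ENNReal.ofReal_div_of_pos pX]
    unfold XX
    rw [ENNReal.ofReal_toReal (chi_ne_top M hβ'0 hβ'), ENNReal.ofReal_toReal (chi_ne_top M hβ0 hβ)]
  rw [hxi, hchi] at hE1 ⊢
  set x := Real.log (XX M β) - Real.log (XX M β') with hx
  set s := Real.log (SS M β) - Real.log (SS M β') with hs
  have ex : XX M β' / XX M β = Real.exp (-x) := by
    rw [hx, neg_sub, Real.exp_sub, Real.exp_log pX, Real.exp_log pX']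
  have ey : (SS M β' / XX M β') / (SS M β / XX M β) = Real.exp (-(s - x)) := by
    have : -(s - x) = (Real.log (SS M β') - Real.log (XX M β'))
      - (Real.log (SS M β) - Real.log (XX M β)) := by rw [hx, hs]; ring
    rw [this, Real.exp_sub, Real.exp_sub, Real.exp_sub, Real.exp_log pX, Real.exp_log pX',
      Real.exp_log pS, Real.exp_log pS']
  rw [ex, ey] at hE1 ⊢
  have h4 : ∀ r : ℝ, ENNReal.ofReal r / 4 = ENNReal.ofReal (r / 4) := fun r => by
    rw [ENNReal.ofReal_div_of_pos (by norm_num)]; norm_num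
  have h2 : ∀ r : ℝ, ENNReal.ofReal r / 2 = ENNReal.ofReal (r / 2) := fun r => by
    rw [ENNReal.ofReal_div_of_pos (by norm_num)]; norm_num
  have hx0 : 0 ≤ x := sub_nonneg.2 (Real.log_le_log pX' (monoX M hβ'0 hβ'β hβ))
  have hcase : (M.E β).toReal ≤ Real.exp (-x) / 4 ∨ (M.E β).toReal ≤ Real.exp (-(s - x)) / 4 := by
    rw [h4, h4] at hE1
    rcases le_max_iff.1 hE1 with h | h
    · exact Or.inl (ENNReal.toReal_le_of_le_ofReal (by positivity) h)
    · exact Or.inr (ENNReal.toReal_le_of_le_ofReal (by positivity) h)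
  obtain ⟨n1, n2⟩ := numerics (x := x) (y := s - x) hx0 ENNReal.toReal_nonneg hEr
    (by linarith [key.1]) (by linarith [key.2]) hcase
  have hl : Real.exp (Real.log 2) = 2 := Real.exp_log (by norm_num)
  constructor
  · rw [h2]
    refine ENNReal.ofReal_le_ofReal ?_
    rw [div_le_iff₀ (by norm_num : (0:ℝ) < 2), ← hl, ← Real.exp_add]
    exact Real.exp_le_exp.2 (by linarith)
  · have : (2:ℝ≥0∞) * ENNReal.ofReal (Real.exp (-x)) = ENNReal.ofReal (2 * Real.exp (-x)) := by
      rw [ENNReal.ofReal_mul (by norm_num)]; norm_num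
    rw [this]
    refine ENNReal.ofReal_le_ofReal ?_
    rw [← hl, ← Real.exp_add]
    exact Real.exp_le_exp.2 (by linarith)
end
end

section
/- Let d > 2 be an integer, J an admissible kernel on ℤ^d, and G ∈ 𝒢 with (J,G) satisfying Assumption G. Let 0 ≤ β' ≤ β < β_c and Z := (β−β')·χ(β'). Then: (i) 1 − χ(β')/χ(β) ≤ Z, and if E(β) < 1 also Z ≤ (1 − χ(β')/χ(β))/(1 − E(β)); (ii) if E(β) ≤ (1/4)·χ(β')/χ(β), then 1 − χ(β')/χ(β) ≤ Z ≤ 1 − (1/2)·χ(β')/χ(β); (iii) if E(β) ≤ min{(1/8)·(ξ(β')/ξ(β))², 1/2}, then 1 − 2·(ξ(β')/ξ(β))² ≤ Z ≤ 1 − (1/4)·(ξ(β')/ξ(β))². -/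
open scoped ENNReal

noncomputable section

open Blackbox

section helpers

lemma aux_hasSum_congr {ι : Type*} {f g : ι → ℝ} {a : ℝ} (h : ∀ i, f i = g i) :
    HasSum f a ↔ HasSum g a := by
  have : f = g := funext h
  rw [this]

lemma aux_summable_prod (r : ℝ) (hr0 : 0 < r) (hr1 : r < 1) (n : ℕ) :
    Summable (fun x : Fin n → ℤ => ∏ i, r ^ (x i).natAbs) := by
  induction n with
  | zero => exact Summable.of_finite
  | succ n ih =>
    have h1 : Summable (fun k : ℤ => r ^ k.natAbs) := by
      apply Summable.of_nat_of_neg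
      · simpa using summable_geometric_of_lt_one hr0.le hr1
      · simpa using summable_geometric_of_lt_one hr0.le hr1
    have h2 := h1.mul_of_nonneg ih (fun k => by positivity) (fun k => by
      apply Finset.prod_nonneg; intros; positivity)
    rw [← (Fin.consEquiv (fun _ : Fin (n+1) => ℤ)).summable_iff]
    refine h2.congr ?_
    intro p
    simp [Fin.prod_univ_succ, Fin.consEquiv]

lemma aux_supNorm_nonneg {d : ℕ} (x : Fin d → ℤ) : 0 ≤ supNorm x := by
  unfold supNorm; positivity

lemma aux_le_supNorm {d : ℕ} (x : Fin d → ℤ) (i : Fin d) :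
    ((x i).natAbs : ℝ) ≤ supNorm x := by
  unfold supNorm
  exact_mod_cast Finset.le_sup (f := fun i => (x i).natAbs) (Finset.mem_univ i)

lemma aux_sqNorm_nonneg {d : ℕ} (x : Fin d → ℤ) : 0 ≤ sqNorm x := by
  unfold sqNorm; positivity

lemma aux_sqNorm_le {d : ℕ} (x : Fin d → ℤ) : sqNorm x ≤ d * supNorm x ^ 2 := by
  unfold sqNorm
  calc ∑ i, ((x i : ℝ)) ^ 2 ≤ ∑ i : Fin d, supNorm x ^ 2 := by
        apply Finset.sum_le_sum
        intro i _
        have := aux_le_supNorm x i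
        rw [← sq_abs]
        gcongr
        simpa [Nat.cast_natAbs] using this
    _ = _ := by simp

lemma aux_summable_exp {d : ℕ} (hd : 0 < d) (c : ℝ) (hc : 0 < c) :
    Summable (fun x : Fin d → ℤ => Real.exp (-c * supNorm x)) := by
  have hd' : (0:ℝ) < d := by exact_mod_cast hd
  refine Summable.of_nonneg_of_le (fun x => (Real.exp_pos _).le) ?_
    (aux_summable_prod (Real.exp (-(c/d))) (Real.exp_pos _) (by
      rw [Real.exp_lt_one_iff]; have := div_pos hc hd'; linarith) d)
  intro x
  have : ∀ i, Real.exp (-(c/d)) ^ (x i).natAbs = Real.exp (-(c/d) * (x i).natAbs) := by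
    intro i; rw [← Real.exp_nat_mul]; ring_nf
  simp_rw [this]
  rw [← Real.exp_sum, Real.exp_le_exp, ← Finset.mul_sum]
  have h2 : ∑ i, ((x i).natAbs : ℝ) ≤ d * supNorm x := by
    calc _ ≤ ∑ i : Fin d, supNorm x := Finset.sum_le_sum fun i _ => aux_le_supNorm x i
      _ = _ := by simp
  have h3 : (c/d) * ∑ i, ((x i).natAbs : ℝ) ≤ (c/d) * (d * supNorm x) := by gcongr
  have : (c/d) * (d * supNorm x) = c * supNorm x := by field_simp
  linarith

lemma aux_summable_sq_exp {d : ℕ} (hd : 0 < d) (c : ℝ) (hc : 0 < c) :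
    Summable (fun x : Fin d → ℤ => sqNorm x * Real.exp (-c * supNorm x)) := by
  refine Summable.of_nonneg_of_le
    (fun x => mul_nonneg (aux_sqNorm_nonneg x) (Real.exp_pos _).le) ?_
    ((aux_summable_exp hd (c/2) (by positivity)).mul_left (d * (8 / c^2)))
  intro x
  have h1 := aux_sqNorm_le x
  have hs := aux_supNorm_nonneg x
  set s := supNorm x
  have h2 : s^2 ≤ (8/c^2) * Real.exp (c/2*s) := by
    have := Real.quadratic_le_exp_of_nonneg (x := c/2*s) (by positivity)
    have h4 : (c/2*s)^2/2 ≤ Real.exp (c/2*s) := by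
      have : 0 ≤ c/2*s := by positivity
      linarith
    calc s^2 = (8/c^2) * ((c/2*s)^2/2) := by field_simp; ring
      _ ≤ _ := by gcongr
  calc sqNorm x * Real.exp (-c*s) ≤ (d * s^2) * Real.exp (-c*s) := by gcongr
    _ ≤ (d * ((8/c^2) * Real.exp (c/2*s))) * Real.exp (-c*s) := by gcongr
    _ = d * (8/c^2) * (Real.exp (c/2*s) * Real.exp (-c*s)) := by ring
    _ = _ := by rw [← Real.exp_add]; ring_nf

lemma aux_sqNorm_neg {d : ℕ} (x : Fin d → ℤ) : sqNorm (-x) = sqNorm x := by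
  simp [sqNorm]

lemma aux_sqNorm_par {d : ℕ} (x y : Fin d → ℤ) :
    sqNorm (x + y) + sqNorm (-x + y) = 2 * sqNorm x + 2 * sqNorm y := by
  simp only [sqNorm, Finset.mul_sum, ← Finset.sum_add_distrib]
  apply Finset.sum_congr rfl
  intro i _
  push_cast [Pi.add_apply, Pi.neg_apply]
  ring

lemma aux_sqNorm_add_le {d : ℕ} (x y : Fin d → ℤ) :
    sqNorm (x + y) ≤ 2 * sqNorm x + 2 * sqNorm y := by
  have := aux_sqNorm_par x y
  have := aux_sqNorm_nonneg (-x + y)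
  linarith

/-- product of three. -/
lemma aux_hasSum3 {V : Type*} {f k g : V → ℝ} (hf : Summable f) (hk : Summable k)
    (hg : Summable g) :
    HasSum (fun p : V × V × V => f p.1 * k p.2.1 * g p.2.2)
      ((∑' x, f x) * (∑' x, k x) * (∑' x, g x)) := by
  have h1 : Summable (fun p : V × V => k p.1 * g p.2) :=
    summable_mul_of_summable_norm hk.norm hg.norm
  have h2 : Summable (fun p : V × V × V => f p.1 * (k p.2.1 * g p.2.2)) :=
    summable_mul_of_summable_norm (f := f) (g := fun p : V × V => k p.1 * g p.2) hf.norm h1.norm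
  have := h2.hasSum
  rw [← tsum_mul_tsum_of_summable_norm (f := f) (g := fun p : V × V => k p.1 * g p.2)
    hf.norm h1.norm, ← tsum_mul_tsum_of_summable_norm hk.norm hg.norm] at this
  simpa [mul_assoc] using this

/-- Data: even summable `f` with second moment, and `k`. -/
lemma aux_moment {d : ℕ} {f k : (Fin d → ℤ) → ℝ} (hf : Summable f) (hk : Summable k)
    (hf2 : Summable fun x => sqNorm x * f x) (hk2 : Summable fun x => sqNorm x * k x)
    (hfe : ∀ x, f (-x) = f x) :
    HasSum (fun p : (Fin d → ℤ) × (Fin d → ℤ) × (Fin d → ℤ) =>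
        sqNorm (p.1 + (p.2.1 + p.2.2)) * (f p.1 * k p.2.1 * f p.2.2))
      (2 * (∑' x, sqNorm x * f x) * (∑' x, f x) * (∑' x, k x) +
        (∑' x, sqNorm x * k x) * (∑' x, f x) ^ 2) := by
  have A := aux_hasSum3 hf2 hk hf
  have B := aux_hasSum3 hf hk2 hf
  have C := aux_hasSum3 hf hk hf2
  have S0 : Summable (fun p : (Fin d → ℤ) × (Fin d → ℤ) × (Fin d → ℤ) =>
      (sqNorm p.1 + sqNorm p.2.1 + sqNorm p.2.2) * (f p.1 * k p.2.1 * f p.2.2)) := by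
    refine ((A.add B).add C).summable.congr ?_
    intro p; ring
  have bound : ∀ (φ : (Fin d → ℤ) × (Fin d → ℤ) × (Fin d → ℤ) → ℝ),
      (∀ p, 0 ≤ φ p) → (∀ p, φ p ≤ 4 * (sqNorm p.1 + sqNorm p.2.1 + sqNorm p.2.2)) →
      Summable (fun p => φ p * (f p.1 * k p.2.1 * f p.2.2)) := by
    intro φ h0 h1
    refine Summable.of_norm_bounded (S0.norm.mul_left 4) ?_
    intro p
    have h3 : 0 ≤ sqNorm p.1 + sqNorm p.2.1 + sqNorm p.2.2 := by
      have := aux_sqNorm_nonneg p.1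
      have := aux_sqNorm_nonneg p.2.1
      have := aux_sqNorm_nonneg p.2.2
      linarith
    rw [norm_mul (φ p), norm_mul (sqNorm p.1 + sqNorm p.2.1 + sqNorm p.2.2),
      Real.norm_of_nonneg (h0 p), Real.norm_of_nonneg h3, ← mul_assoc]
    exact mul_le_mul_of_nonneg_right (h1 p) (norm_nonneg _)
  have S1 := bound (fun p => sqNorm (p.1 + (p.2.1 + p.2.2))) (fun p => aux_sqNorm_nonneg _) (by
    intro p
    have := aux_sqNorm_add_le p.1 (p.2.1 + p.2.2)
    have := aux_sqNorm_add_le p.2.1 p.2.2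
    have := aux_sqNorm_nonneg p.1
    linarith)
  have S2 := bound (fun p => sqNorm (p.2.1 + p.2.2)) (fun p => aux_sqNorm_nonneg _) (by
    intro p
    have := aux_sqNorm_add_le p.2.1 p.2.2
    have := aux_sqNorm_nonneg p.1
    have := aux_sqNorm_nonneg p.2.1
    have := aux_sqNorm_nonneg p.2.2
    linarith)
  let e1 : ((Fin d → ℤ) × (Fin d → ℤ) × (Fin d → ℤ)) ≃
      ((Fin d → ℤ) × (Fin d → ℤ) × (Fin d → ℤ)) :=
    Equiv.prodCongr (Equiv.neg _) (Equiv.refl _)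
  let e2 : ((Fin d → ℤ) × (Fin d → ℤ) × (Fin d → ℤ)) ≃
      ((Fin d → ℤ) × (Fin d → ℤ) × (Fin d → ℤ)) :=
    Equiv.prodCongr (Equiv.refl _) (Equiv.prodCongr (Equiv.refl _) (Equiv.neg _))
  have H1 := S1.hasSum
  have H1' := (e1.hasSum_iff).2 H1
  have H2 := S2.hasSum
  have H2' := (e2.hasSum_iff).2 H2
  have U1 := (H1.add H1').unique (f := _) (a₂ := _) (by
    have := (A.mul_left 2).add (H2.mul_left 2)
    refine (aux_hasSum_congr (fun p => ?_)).2 this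
    have := aux_sqNorm_par p.1 (p.2.1 + p.2.2)
    simp only [e1, Function.comp, Equiv.prodCongr_apply, Prod.map, Equiv.neg_apply,
      Equiv.refl_apply, hfe]
    linear_combination (f p.1 * k p.2.1 * f p.2.2) * this)
  have U2 := (H2.add H2').unique (f := _) (a₂ := _) (by
    have := (B.mul_left 2).add (C.mul_left 2)
    refine (aux_hasSum_congr (fun p => ?_)).2 this
    have := aux_sqNorm_par p.2.2 p.2.1
    simp only [e2, Function.comp, Equiv.prodCongr_apply, Prod.map, Equiv.neg_apply,
      Equiv.refl_apply, hfe]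
    rw [add_comm p.2.2, add_comm (-p.2.2)] at this
    linear_combination (f p.1 * k p.2.1 * f p.2.2) * this)
  convert H1 using 1
  linear_combination (-1/2) * U1 - (1/2) * U2

/-- summation equivalence -/
def auxEquiv (V : Type*) [AddCommGroup V] : V × (V × V) ≃ V × V × V where
  toFun q := (q.2.1, q.2.2, q.1 - q.2.1 - q.2.2)
  invFun q := (q.1 + (q.2.1 + q.2.2), (q.1, q.2.1))
  left_inv q := by ext <;> simp
  right_inv q := by ext <;> simp

lemma aux_conv {V : Type*} [AddCommGroup V] {f k φ : V → ℝ} {T : ℝ}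
    (hs : Summable fun q : V × V × V => f q.1 * k q.2.1 * f q.2.2)
    (hT : HasSum (fun q : V × V × V => φ (q.1 + (q.2.1 + q.2.2)) * (f q.1 * k q.2.1 * f q.2.2)) T) :
    HasSum (fun x => φ x * ∑' p : V × V, f p.1 * k p.2 * f (x - p.1 - p.2)) T := by
  have h1 := ((auxEquiv V).hasSum_iff).2 hT
  have h2 := ((auxEquiv V).summable_iff).2 hs
  refine h1.prod_fiberwise ?_
  intro x
  have h3 := (h2.prod_factor x).hasSum.mul_left (φ x)
  refine (aux_hasSum_congr (fun p => ?_)).2 h3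
  simp [auxEquiv]

lemma aux_conv_summable {V : Type*} [AddCommGroup V] {f k : V → ℝ}
    (hs : Summable fun q : V × V × V => f q.1 * k q.2.1 * f q.2.2) (x : V) :
    Summable (fun p : V × V => f p.1 * k p.2 * f (x - p.1 - p.2)) := by
  have h2 := ((auxEquiv V).summable_iff).2 hs
  exact h2.prod_factor x

lemma aux_core (X m X1 m1 h h2 : ℝ → ℝ) (s e a b : ℝ) (hab : a ≤ b) (hs : 0 < s) (he0 : 0 ≤ e)
    (hX : ∀ t ∈ Set.Icc a b, 1 ≤ X t) (hm : ∀ t ∈ Set.Icc a b, 0 ≤ m t)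
    (hXc : ContinuousOn X (Set.Icc a b)) (hmc : ContinuousOn m (Set.Icc a b))
    (hXd : ∀ t ∈ Set.Ioo a b, HasDerivAt X (X1 t) t)
    (hmd : ∀ t ∈ Set.Ioo a b, HasDerivAt m (m1 t) t)
    (hh : ∀ t ∈ Set.Ioo a b, 0 ≤ h t) (hh2 : ∀ t ∈ Set.Ioo a b, 0 ≤ h2 t)
    (hE : ∀ t ∈ Set.Ioo a b, h t + h2 t / (s + m t / X t) ≤ e)
    (hXu : ∀ t ∈ Set.Ioo a b, X1 t ≤ X t ^ 2)
    (hXl : ∀ t ∈ Set.Ioo a b, (1 - h t) * X t ^ 2 ≤ X1 t)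
    (hmu : ∀ t ∈ Set.Ioo a b, m1 t ≤ 2 * m t * X t + s * X t ^ 2)
    (hml : ∀ t ∈ Set.Ioo a b,
      2 * m t * X t * (1 - h t) + (s - h2 t) * X t ^ 2 ≤ m1 t) :
    1 - X a / X b ≤ (b - a) * X a ∧
    (b - a) * X a * (1 - e) ≤ 1 - X a / X b ∧
    (∀ q, q = (s + m a / X a) / (s + m b / X b) → e ≤ q / 8 → e ≤ 1 / 2 →
      q ≤ 1 ∧ X a / X b ≤ 2 * q ∧ 2 / 3 * q ≤ X a / X b) := by
  have ha : a ∈ Set.Icc a b := ⟨le_rfl, hab⟩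
  have hb : b ∈ Set.Icc a b := ⟨hab, le_rfl⟩
  have hXa := hX a ha
  have hXb := hX b hb
  have sub : ∀ t ∈ Set.Ioo a b, t ∈ Set.Icc a b := fun t ht => ⟨ht.1.le, ht.2.le⟩
  have hX0 : ∀ t ∈ Set.Icc a b, X t ≠ 0 := fun t ht => by have := hX t ht; positivity
  have hQ : ∀ t ∈ Set.Icc a b, 0 < s + m t / X t := fun t ht => by
    have := hX t ht; have := hm t ht; positivity
  have hhe : ∀ t ∈ Set.Ioo a b, h t ≤ e := by
    intro t ht
    have h1 := hE t ht
    have h2' := hh2 t ht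
    have h3 := hQ t (sub t ht)
    have : 0 ≤ h2 t / (s + m t / X t) := by positivity
    linarith
  have hXe : ∀ t ∈ Set.Ioo a b, (1 - e) * X t ^ 2 ≤ X1 t := by
    intro t ht
    refine le_trans ?_ (hXl t ht)
    have := hhe t ht
    gcongr
  refine ⟨?_, ?_, ?_⟩
  · have mono : MonotoneOn (fun t => (X t)⁻¹ + 1 * t) (Set.Icc a b) := by
      apply monotoneOn_of_hasDerivWithinAt_nonneg (convex_Icc a b)
        (f' := fun t => -X1 t / X t ^ 2 + 1)
      · exact (hXc.inv₀ hX0).add (by fun_prop)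
      · intro t ht
        rw [interior_Icc] at ht
        have h1 := ((hXd t ht).inv (hX0 t (sub t ht))).add (((hasDerivAt_id t).const_mul 1))
        rw [mul_one] at h1
        exact h1.hasDerivWithinAt
      · intro t ht
        rw [interior_Icc] at ht
        have h0 := hX t (sub t ht)
        have h1 := hXu t ht
        have : X1 t / X t ^ 2 ≤ 1 := by rw [div_le_iff₀ (by positivity)]; linarith
        rw [neg_div]; linarith
    have h1 := mono ha hb hab
    simp only at h1
    have h2 : (X a)⁻¹ - (X b)⁻¹ ≤ (b - a) := by linarith
    have h3 := mul_le_mul_of_nonneg_left h2 (by linarith : 0 ≤ X a)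
    have h4 : X a * ((X a)⁻¹ - (X b)⁻¹) = 1 - X a / X b := by field_simp
    nlinarith
  · have anti : AntitoneOn (fun t => (X t)⁻¹ + (1 - e) * t) (Set.Icc a b) := by
      apply antitoneOn_of_hasDerivWithinAt_nonpos (convex_Icc a b)
        (f' := fun t => -X1 t / X t ^ 2 + (1 - e))
      · exact (hXc.inv₀ hX0).add (by fun_prop)
      · intro t ht
        rw [interior_Icc] at ht
        have h1 := ((hXd t ht).inv (hX0 t (sub t ht))).add (((hasDerivAt_id t).const_mul (1 - e)))
        rw [mul_one] at h1
        exact h1.hasDerivWithinAt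
      · intro t ht
        rw [interior_Icc] at ht
        have h0 := hX t (sub t ht)
        have h1 := hXe t ht
        have : (1 - e) ≤ X1 t / X t ^ 2 := by rw [le_div_iff₀ (by positivity)]; exact h1
        rw [neg_div]; linarith
    have h1 := anti ha hb hab
    simp only at h1
    have h2 : (b - a) * (1 - e) ≤ (X a)⁻¹ - (X b)⁻¹ := by linarith
    have h3 := mul_le_mul_of_nonneg_left h2 (by linarith : 0 ≤ X a)
    have h4 : X a * ((X a)⁻¹ - (X b)⁻¹) = 1 - X a / X b := by field_simp
    nlinarith
  · intro q hq he8 he2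
    let Q : ℝ → ℝ := fun t => s + m t / X t
    let Q1 : ℝ → ℝ := fun t => (m1 t * X t - m t * X1 t) / X t ^ 2
    have hQd : ∀ t ∈ Set.Ioo a b, HasDerivAt Q (Q1 t) t := fun t ht =>
      ((hmd t ht).div (hXd t ht) (hX0 t (sub t ht))).const_add s
    have hQc : ContinuousOn Q (Set.Icc a b) := continuousOn_const.add (hmc.div hXc hX0)
    have hmX : ∀ t, t ∈ Set.Ioo a b → m t = (Q t - s) * X t := by
      intro t ht
      have := hX0 t (sub t ht)
      simp only [Q]; field_simp; ring
    have hh2e : ∀ t ∈ Set.Ioo a b, h2 t ≤ (e - h t) * Q t := by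
      intro t ht
      have h3 := hQ t (sub t ht)
      have h1 : h2 t / (s + m t / X t) ≤ e - h t := by linarith [hE t ht]
      rwa [div_le_iff₀ h3] at h1
    have hQu : ∀ t ∈ Set.Ioo a b, Q1 t / Q t ≤ (1 + e) * X t := by
      intro t ht
      have h0 := hX t (sub t ht)
      have h3 : 0 < Q t := hQ t (sub t ht)
      have h4 := hm t (sub t ht)
      have hm' := hmX t ht
      rw [div_le_iff₀ h3]
      simp only [Q1]
      rw [div_le_iff₀ (by positivity)]
      have i1 := mul_le_mul_of_nonneg_right (hmu t ht) (by linarith : 0 ≤ X t)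
      have i2 := mul_le_mul_of_nonneg_left (hXe t ht) h4
      have : (1 + e) * X t * Q t * X t ^ 2 =
        (2 * m t * X t + s * X t ^ 2) * X t - m t * ((1 - e) * X t ^ 2) + e * s * X t ^ 3 := by
        rw [hm']; ring
      have : 0 ≤ e * s * X t ^ 3 := by positivity
      linarith
    have hQl : ∀ t ∈ Set.Ioo a b, (1 - 2 * e) * X t ≤ Q1 t / Q t := by
      intro t ht
      have h0 := hX t (sub t ht)
      have h3 : 0 < Q t := hQ t (sub t ht)
      have h4 := hm t (sub t ht)
      have hm' := hmX t ht
      rw [le_div_iff₀ h3]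
      simp only [Q1]
      rw [le_div_iff₀ (by positivity)]
      have i1 := mul_le_mul_of_nonneg_right (hml t ht) (by linarith : 0 ≤ X t)
      have i2 := mul_le_mul_of_nonneg_left (hXu t ht) h4
      have i3 := mul_le_mul_of_nonneg_right (hh2e t ht) (by positivity : 0 ≤ X t ^ 3)
      have i4 := hhe t ht
      have i5 := hh t ht
      have : (2 * m t * X t * (1 - h t) + (s - h2 t) * X t ^ 2) * X t - m t * X t ^ 2
          = (1 - 2 * h t) * Q t * X t ^ 3 + 2 * h t * s * X t ^ 3 - h2 t * X t ^ 3 := by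
        rw [hm']; ring
      have : 0 ≤ 2 * h t * s * X t ^ 3 := by positivity
      have i6 : 0 ≤ (e - h t) * (Q t * X t ^ 3) :=
        mul_nonneg (by linarith) (by positivity)
      linarith
    have hA : AntitoneOn (fun t => (1 - e) * Real.log (Q t) - (1 + e) * Real.log (X t))
        (Set.Icc a b) := by
      apply antitoneOn_of_hasDerivWithinAt_nonpos (convex_Icc a b)
        (f' := fun t => (1 - e) * (Q1 t / Q t) - (1 + e) * (X1 t / X t))
      · exact (continuousOn_const.mul (hQc.log fun t ht => (hQ t ht).ne')).sub
          (continuousOn_const.mul (hXc.log hX0))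
      · intro t ht
        rw [interior_Icc] at ht
        exact ((((hQd t ht).log (hQ t (sub t ht)).ne').const_mul _).sub
          (((hXd t ht).log (hX0 t (sub t ht))).const_mul _)).hasDerivWithinAt
      · intro t ht
        rw [interior_Icc] at ht
        have h0 := hX t (sub t ht)
        have i1 : (1 - e) * X t ≤ X1 t / X t := by
          rw [le_div_iff₀ (by positivity)]; linarith [hXe t ht]
        have i2 := mul_le_mul_of_nonneg_left (hQu t ht) (by linarith : 0 ≤ 1 - e)
        have i3 := mul_le_mul_of_nonneg_left i1 (by linarith : 0 ≤ 1 + e)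
        linarith
    have hB : MonotoneOn (fun t => Real.log (Q t) - (1 - 2 * e) * Real.log (X t))
        (Set.Icc a b) := by
      apply monotoneOn_of_hasDerivWithinAt_nonneg (convex_Icc a b)
        (f' := fun t => (Q1 t / Q t) - (1 - 2 * e) * (X1 t / X t))
      · exact (hQc.log fun t ht => (hQ t ht).ne').sub
          (continuousOn_const.mul (hXc.log hX0))
      · intro t ht
        rw [interior_Icc] at ht
        exact (((hQd t ht).log (hQ t (sub t ht)).ne').sub
          (((hXd t ht).log (hX0 t (sub t ht))).const_mul _)).hasDerivWithinAt
      · intro t ht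
        rw [interior_Icc] at ht
        have h0 := hX t (sub t ht)
        have i1 : X1 t / X t ≤ X t := by
          rw [div_le_iff₀ (by positivity)]; linarith [hXu t ht]
        have i3 := mul_le_mul_of_nonneg_left i1 (by linarith : 0 ≤ 1 - 2 * e)
        linarith [hQl t ht]
    have hM : MonotoneOn X (Set.Icc a b) := by
      apply monotoneOn_of_hasDerivWithinAt_nonneg (convex_Icc a b) hXc (f' := X1)
      · intro t ht
        rw [interior_Icc] at ht
        exact (hXd t ht).hasDerivWithinAt
      · intro t ht
        rw [interior_Icc] at ht
        refine le_trans ?_ (hXe t ht)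
        exact mul_nonneg (by linarith) (by positivity)
    have A1 := hA ha hb hab
    have B1 := hB ha hb hab
    have M1 := hM ha hb hab
    simp only at A1 B1
    have hQa : 0 < Q a := hQ a ha
    have hQb : 0 < Q b := hQ b hb
    have hq' : q = Q a / Q b := hq
    have hq0 : 0 < q := by rw [hq']; positivity
    have hr0 : 0 < X a / X b := by positivity
    have lq : Real.log q = Real.log (Q a) - Real.log (Q b) := by
      rw [hq', Real.log_div hQa.ne' hQb.ne']
    have lr : Real.log (X a / X b) = Real.log (X a) - Real.log (X b) := by
      rw [Real.log_div (by positivity) (by positivity)]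
    have lr0 : Real.log (X a / X b) ≤ 0 := by
      apply Real.log_nonpos hr0.le
      rw [div_le_one (by positivity)]; exact M1
    generalize hr : X a / X b = r at *
    have A2 : (1 + e) * Real.log r ≤ (1 - e) * Real.log q := by rw [lq, lr]; linarith
    have B2 : Real.log q ≤ (1 - 2 * e) * Real.log r := by rw [lq, lr]; linarith
    have lq0 : Real.log q ≤ 0 := by nlinarith
    have hq1 : q ≤ 1 := by
      by_contra hc
      have := Real.log_pos (not_le.1 hc)
      linarith
    have qlq : q * (-Real.log q) ≤ 1 := by
      have := Real.one_sub_inv_le_log_of_pos hq0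
      have h2 := mul_le_mul_of_nonneg_left this hq0.le
      have : q * (1 - q⁻¹) = q - 1 := by field_simp
      nlinarith
    have elq : e * (-Real.log q) ≤ 1 / 8 := by
      have := mul_le_mul_of_nonneg_right he8 (by linarith : 0 ≤ -Real.log q)
      linarith
    have he9 : e ≤ 1 / 8 := by linarith
    refine ⟨hq1, ?_, ?_⟩
    · have h1 : Real.log r ≤ Real.log q + 1 / 4 := by
        by_contra hc
        push Not at hc
        have := mul_lt_mul_of_pos_left hc (by linarith : 0 < 1 + e)
        nlinarith
      have h2 : Real.log r ≤ Real.log (2 * q) := by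
        rw [Real.log_mul (by norm_num) hq0.ne']
        linarith [Real.log_two_gt_d9]
      exact (Real.log_le_log_iff hr0 (by positivity)).1 h2
    · have h1 : Real.log q - 1 / 3 ≤ Real.log r := by
        by_contra hc
        push Not at hc
        have := mul_lt_mul_of_pos_left hc (by linarith : 0 < 1 - 2 * e)
        nlinarith
      have h2 : Real.log (2 / 3 * q) ≤ Real.log r := by
        rw [Real.log_mul (by norm_num) hq0.ne']
        have := Real.log_le_sub_one_of_pos (by norm_num : (0:ℝ) < 2 / 3)
        linarith
      exact (Real.log_le_log_iff (by positivity) hr0).1 h2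

end helpers

section modelLemmas

variable {d : ℕ} {c₀ : ℝ} (M : Model d c₀)

/-- real version of `G` -/
def auxg (t : ℝ) (x : Fin d → ℤ) : ℝ := (M.G t x).toReal

lemma auxg_nonneg (t : ℝ) (x : Fin d → ℤ) : 0 ≤ auxg M t x := ENNReal.toReal_nonneg

lemma auxG_ne_top {t : ℝ} (h0 : 0 ≤ t) (h1 : ENNReal.ofReal t < M.βc) (x : Fin d → ℤ) :
    M.G t x ≠ ⊤ := by
  obtain ⟨C, hC, c, hc, h⟩ := M.expDecay h0 h1
  exact ne_top_of_le_ne_top ENNReal.ofReal_ne_top (h x)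

lemma auxG_eq {t : ℝ} (h0 : 0 ≤ t) (h1 : ENNReal.ofReal t < M.βc) (x : Fin d → ℤ) :
    M.G t x = ENNReal.ofReal (auxg M t x) := by
  rw [auxg, ENNReal.ofReal_toReal (auxG_ne_top M h0 h1 x)]

lemma auxg_even (t : ℝ) (x : Fin d → ℤ) : auxg M t (-x) = auxg M t x := by
  have := M.symm t 1 (fun _ => true) x
  unfold auxg
  rw [← this]
  congr 2
  funext i
  simp

lemma auxg_bound (hd : 0 < d) {t : ℝ} (h0 : 0 ≤ t) (h1 : ENNReal.ofReal t < M.βc) :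
    Summable (auxg M t) ∧ Summable (fun x => sqNorm x * auxg M t x) := by
  obtain ⟨C, hC, c, hc, h⟩ := M.expDecay h0 h1
  have hb : ∀ x, auxg M t x ≤ C * Real.exp (-c * supNorm x) := fun x =>
    ENNReal.toReal_le_of_le_ofReal (by positivity) (h x)
  constructor
  · exact Summable.of_nonneg_of_le (auxg_nonneg M t) hb ((aux_summable_exp hd c hc).mul_left C)
  · refine Summable.of_nonneg_of_le
      (fun x => mul_nonneg (aux_sqNorm_nonneg x) (auxg_nonneg M t x)) (fun x => ?_)
      ((aux_summable_sq_exp hd c hc).mul_left C)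
    have := mul_le_mul_of_nonneg_left (hb x) (aux_sqNorm_nonneg x)
    linarith

lemma auxH_bound (hd : 0 < d) {t : ℝ} (h0 : 0 ≤ t) (h1 : ENNReal.ofReal t < M.βc) :
    Summable (M.H t) ∧ Summable (fun x => sqNorm x * M.H t x) := by
  obtain ⟨C, hC, c, hc, hb⟩ := M.H_expDecay h0 h1
  constructor
  · exact Summable.of_nonneg_of_le (M.H_nonneg t) hb ((aux_summable_exp hd c hc).mul_left C)
  · refine Summable.of_nonneg_of_le
      (fun x => mul_nonneg (aux_sqNorm_nonneg x) (M.H_nonneg t x)) (fun x => ?_)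
      ((aux_summable_sq_exp hd c hc).mul_left C)
    have := mul_le_mul_of_nonneg_left (hb x) (aux_sqNorm_nonneg x)
    linarith

/-- real susceptibility -/
def auxX (t : ℝ) : ℝ := ∑' x, auxg M t x
/-- second moment -/
def auxm (t : ℝ) : ℝ := ∑' x, sqNorm x * auxg M t x
/-- variance of the kernel -/
def auxs : ℝ := ∑' x, sqNorm x * M.K.J x

lemma auxs_pos (hc : 0 < c₀) : 0 < auxs M := by
  have h1 := M.K.sigma_lower
  have h2 : 0 < c₀ * M.K.R := mul_pos hc (by linarith [M.K.R_ge_one])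
  exact Real.sqrt_pos.1 (h2.trans_le h1)

lemma auxm_nonneg (t : ℝ) : 0 ≤ auxm M t :=
  tsum_nonneg fun x => mul_nonneg (aux_sqNorm_nonneg x) (auxg_nonneg M t x)

lemma auxg_mono {s t : ℝ} (hs : 0 ≤ s) (hst : s ≤ t) (h1 : ENNReal.ofReal t < M.βc)
    (x : Fin d → ℤ) : auxg M s x ≤ auxg M t x :=
  ENNReal.toReal_mono (auxG_ne_top M (hs.trans hst) h1 x) (M.mono x hs hst h1.le)

lemma auxX_ge_one (hd : 0 < d) {t : ℝ} (h0 : 0 ≤ t) (h1 : ENNReal.ofReal t < M.βc) :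
    1 ≤ auxX M t := by
  have h2 : (1 : ℝ) ≤ auxg M t 0 := by
    have := auxg_mono M le_rfl h0 h1 0
    rw [auxg, M.init] at this
    simpa using this
  exact h2.trans ((auxg_bound M hd h0 h1).1.le_tsum 0 (fun x _ => auxg_nonneg M t x))

lemma aux_chi (hd : 0 < d) {t : ℝ} (h0 : 0 ≤ t) (h1 : ENNReal.ofReal t < M.βc) :
    M.chi t = ENNReal.ofReal (auxX M t) := by
  unfold Model.chi auxX
  rw [ENNReal.ofReal_tsum_of_nonneg (auxg_nonneg M t) (auxg_bound M hd h0 h1).1]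
  exact tsum_congr (auxG_eq M h0 h1)

lemma aux_xiSq (hd : 0 < d) {t : ℝ} (h0 : 0 ≤ t) (h1 : ENNReal.ofReal t < M.βc) :
    M.xiSq t = ENNReal.ofReal (auxs M + auxm M t / auxX M t) := by
  have hX := auxX_ge_one M hd h0 h1
  obtain ⟨b1, b2⟩ := auxg_bound M hd h0 h1
  have hs : 0 ≤ auxs M := tsum_nonneg fun x => mul_nonneg (aux_sqNorm_nonneg x) (M.K.nonneg x)
  have hm := auxm_nonneg M t
  have inner : ∀ y, ∑' c, ENNReal.ofReal (sqNorm (c + y)) * M.G t c =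
      ENNReal.ofReal (sqNorm y * auxX M t + auxm M t) := by
    intro y
    have e1 : ∑' c, ENNReal.ofReal (sqNorm (c + y)) * M.G t c =
        ∑' c, ENNReal.ofReal (sqNorm (-c + y)) * M.G t c := by
      rw [← (Equiv.neg (Fin d → ℤ)).tsum_eq]
      apply tsum_congr
      intro c
      rw [auxG_eq M h0 h1, auxG_eq M h0 h1, Equiv.neg_apply, auxg_even]
    have e2 : 2 * ∑' c, ENNReal.ofReal (sqNorm (c + y)) * M.G t c =
        2 * ENNReal.ofReal (sqNorm y * auxX M t + auxm M t) := by
      rw [two_mul]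
      nth_rewrite 2 [e1]
      rw [← ENNReal.tsum_add]
      have hsum : Summable (fun c => 2 * (sqNorm y * auxg M t c + sqNorm c * auxg M t c)) :=
        ((b1.mul_left _).add b2).mul_left 2
      have hval : ∑' c, 2 * (sqNorm y * auxg M t c + sqNorm c * auxg M t c) =
          2 * (sqNorm y * auxX M t + auxm M t) := by
        rw [tsum_mul_left, (b1.mul_left _).tsum_add b2, tsum_mul_left, auxX, auxm]
      have h2 : (2 : ℝ≥0∞) = ENNReal.ofReal 2 := by simp
      rw [h2, ← ENNReal.ofReal_mul (by norm_num), ← hval, ENNReal.ofReal_tsum_of_nonneg _ hsum]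
      · apply tsum_congr
        intro c
        have hg := auxg_nonneg M t c
        have p1 := aux_sqNorm_nonneg (c + y)
        have p2 := aux_sqNorm_nonneg (-c + y)
        rw [auxG_eq M h0 h1, ← add_mul, ← ENNReal.ofReal_add p1 p2,
          ← ENNReal.ofReal_mul (by positivity), aux_sqNorm_par]
        congr 1; ring
      · intro c
        have := auxg_nonneg M t c
        have := aux_sqNorm_nonneg c
        have := aux_sqNorm_nonneg y
        positivity
    exact (ENNReal.mul_right_inj (by norm_num) (by norm_num)).1 e2
  have num : ∑' x, ENNReal.ofReal (sqNorm x) * M.F t x =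
      ENNReal.ofReal (auxs M * auxX M t + auxm M t) := by
    unfold Model.F
    simp_rw [← ENNReal.tsum_mul_left]
    rw [ENNReal.tsum_comm]
    have : ∀ y, ∑' x, ENNReal.ofReal (sqNorm x) * (ENNReal.ofReal (M.K.J y) * M.G t (x - y)) =
        ENNReal.ofReal (auxX M t * (sqNorm y * M.K.J y) + auxm M t * M.K.J y) := by
      intro y
      rw [← (Equiv.addRight y).tsum_eq]
      have hJ := M.K.nonneg y
      have := aux_sqNorm_nonneg y
      have e3 : auxX M t * (sqNorm y * M.K.J y) + auxm M t * M.K.J y =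
        M.K.J y * (sqNorm y * auxX M t + auxm M t) := by ring
      rw [e3, ENNReal.ofReal_mul hJ, ← inner y, ← ENNReal.tsum_mul_left]
      apply tsum_congr
      intro c
      simp only [Equiv.coe_addRight, add_sub_cancel_right]
      ring
    simp_rw [this]
    have S1 := M.K.summable_sq.mul_left (auxX M t)
    have S2 := M.K.summable.mul_left (auxm M t)
    rw [← ENNReal.ofReal_tsum_of_nonneg _ (S1.add S2)]
    · congr 1
      rw [S1.tsum_add S2, tsum_mul_left, tsum_mul_left, M.K.norm_one, auxs]; ring
    · intro y
      have := aux_sqNorm_nonneg y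
      have := M.K.nonneg y
      positivity
  unfold Model.xiSq
  rw [num, aux_chi M hd h0 h1, ← ENNReal.ofReal_div_of_pos (by linarith)]
  congr 1
  field_simp

/-- convolution `G * k * G` -/
def auxC (k : (Fin d → ℤ) → ℝ) (t : ℝ) (x : Fin d → ℤ) : ℝ :=
  ∑' p : (Fin d → ℤ) × (Fin d → ℤ), auxg M t p.1 * k p.2 * auxg M t (x - p.1 - p.2)

lemma auxC_sums (hd : 0 < d) {t : ℝ} (h0 : 0 ≤ t) (h1 : ENNReal.ofReal t < M.βc)
    {k : (Fin d → ℤ) → ℝ} (hk : Summable k) (hk2 : Summable fun x => sqNorm x * k x) :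
    HasSum (auxC M k t) (auxX M t ^ 2 * ∑' x, k x) ∧
    HasSum (fun x => sqNorm x * auxC M k t x)
      (2 * auxm M t * auxX M t * (∑' x, k x) + (∑' x, sqNorm x * k x) * auxX M t ^ 2) := by
  obtain ⟨b1, b2⟩ := auxg_bound M hd h0 h1
  have S := aux_hasSum3 b1 hk b1
  constructor
  · have := aux_conv (φ := fun _ => 1) S.summable (T := auxX M t ^ 2 * ∑' x, k x) (by
      refine (aux_hasSum_congr (fun p => one_mul _)).2 ?_
      have e : auxX M t ^ 2 * ∑' x, k x =
        (∑' x, auxg M t x) * (∑' x, k x) * (∑' x, auxg M t x) := by unfold auxX; ring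
      rw [e]; exact S)
    refine (aux_hasSum_congr (fun x => ?_)).2 this
    simp [auxC]
  · exact aux_conv S.summable (aux_moment b1 hk b2 hk2 (auxg_even M t))

lemma auxJC_nonneg (t : ℝ) (x : Fin d → ℤ) : 0 ≤ auxC M M.K.J t x :=
  tsum_nonneg fun p => mul_nonneg (mul_nonneg (auxg_nonneg M t _) (M.K.nonneg _))
    (auxg_nonneg M t _)

lemma auxJC_mono (hd : 0 < d) {s t : ℝ} (hs : 0 ≤ s) (hst : s ≤ t)
    (h1 : ENNReal.ofReal t < M.βc) (x : Fin d → ℤ) :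
    auxC M M.K.J s x ≤ auxC M M.K.J t x := by
  have hs1 : ENNReal.ofReal s < M.βc := (ENNReal.ofReal_le_ofReal hst).trans_lt h1
  have b1 := (auxg_bound M hd hs hs1).1
  have b2 := (auxg_bound M hd (hs.trans hst) h1).1
  refine Summable.tsum_le_tsum (fun p => ?_)
    (aux_conv_summable (aux_hasSum3 b1 M.K.summable b1).summable x)
    (aux_conv_summable (aux_hasSum3 b2 M.K.summable b2).summable x)
  exact mul_le_mul (mul_le_mul_of_nonneg_right (auxg_mono M hs hst h1 _) (M.K.nonneg _))
    (auxg_mono M hs hst h1 _) (auxg_nonneg M s _)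
    (mul_nonneg (auxg_nonneg M t _) (M.K.nonneg _))

lemma aux_I1 (hd : 0 < d) {s t : ℝ} (hs : 0 ≤ s) (hst : s ≤ t)
    (h1 : ENNReal.ofReal t < M.βc) (x : Fin d → ℤ) :
    auxg M t x ≤ auxg M s x + (t - s) * auxC M M.K.J t x := by
  have ht := hs.trans hst
  have hs1 : ENNReal.ofReal s < M.βc := (ENNReal.ofReal_le_ofReal hst).trans_lt h1
  have b2 := (auxg_bound M hd ht h1).1
  have h := M.I1 hs hst h1 x
  have hle : ∑' p : (Fin d → ℤ) × (Fin d → ℤ),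
        M.G s p.1 * ENNReal.ofReal (M.K.J p.2) * M.G t (x - p.1 - p.2) ≤
        ENNReal.ofReal (auxC M M.K.J t x) := by
    unfold auxC
    rw [ENNReal.ofReal_tsum_of_nonneg _
      (aux_conv_summable (aux_hasSum3 b2 M.K.summable b2).summable x)]
    · refine ENNReal.tsum_le_tsum (fun _ => ?_)
      rw [ENNReal.ofReal_mul (mul_nonneg (auxg_nonneg M t _) (M.K.nonneg _)),
        ENNReal.ofReal_mul (auxg_nonneg M t _), ← auxG_eq M ht h1, ← auxG_eq M ht h1]
      gcongr
      exact M.mono _ hs hst h1.le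
    · intro p
      exact mul_nonneg (mul_nonneg (auxg_nonneg M t _) (M.K.nonneg _)) (auxg_nonneg M t _)
  have h' : M.G t x ≤ ENNReal.ofReal (auxg M s x + (t - s) * auxC M M.K.J t x) := by
    rw [ENNReal.ofReal_add (auxg_nonneg M s x)
      (mul_nonneg (by linarith) (auxJC_nonneg M t x)), ENNReal.ofReal_mul (by linarith),
      ← auxG_eq M hs hs1]
    refine h.trans ?_
    gcongr
  exact ENNReal.toReal_le_of_le_ofReal (add_nonneg (auxg_nonneg M s x)
      (mul_nonneg (by linarith) (auxJC_nonneg M t x))) h'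

lemma aux_deriv {t : ℝ} (h0 : 0 < t) (h1 : ENNReal.ofReal t < M.βc) (x : Fin d → ℤ) :
    HasDerivAt (fun s => auxg M s x) (M.G' t x) t :=
  (M.deriv x h0.le h1).hasDerivAt (Ici_mem_nhds h0)

lemma aux_deriv_bounds (hd : 0 < d) {t : ℝ} (h0 : 0 < t) (h1 : ENNReal.ofReal t < M.βc)
    (x : Fin d → ℤ) : 0 ≤ M.G' t x ∧ M.G' t x ≤ auxC M M.K.J t x := by
  have h := (hasDerivAt_iff_tendsto_slope.1 (aux_deriv M h0 h1 x)).mono_left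
    (nhdsWithin_mono t (fun y (hy : y < t) => hy.ne) : nhdsWithin t (Set.Iio t) ≤ _)
  have ev : ∀ᶠ s in nhdsWithin t (Set.Iio t), 0 < s ∧ s < t := by
    have := Ioo_mem_nhdsLT h0
    exact this
  constructor
  · refine ge_of_tendsto h (ev.mono fun s hs => ?_)
    rw [slope_def_field]
    have := auxg_mono M hs.1.le hs.2.le h1 x
    exact div_nonneg_of_nonpos (by linarith) (by linarith [hs.2])
  · refine le_of_tendsto h (ev.mono fun s hs => ?_)
    rw [slope_comm, slope_def_field, div_le_iff₀ (by linarith [hs.2])]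
    have := aux_I1 M hd hs.1.le hs.2.le h1 x
    linarith

lemma aux_tsumderiv (hd : 0 < d) {β : ℝ} (h1 : ENNReal.ofReal β < M.βc)
    (φ : (Fin d → ℤ) → ℝ) (hφ : ∀ x, 0 ≤ φ x)
    (hg : ∀ t, 0 ≤ t → t ≤ β → Summable fun x => φ x * auxg M t x)
    (hC : ∀ t, 0 ≤ t → t ≤ β → Summable fun x => φ x * auxC M M.K.J t x)
    {t : ℝ} (ht : t ∈ Set.Ioo 0 β) :
    HasDerivAt (fun s => ∑' x, φ x * auxg M s x) (∑' x, φ x * M.G' t x) t ∧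
    Summable (fun x => φ x * M.G' t x) := by
  have hlt : ∀ s ∈ Set.Ioo 0 β, ENNReal.ofReal s < M.βc := fun s hs =>
    (ENNReal.ofReal_le_ofReal hs.2.le).trans_lt h1
  have hb : ∀ x, ∀ s ∈ Set.Ioo 0 β, ‖φ x * M.G' s x‖ ≤ φ x * auxC M M.K.J β x := by
    intro x s hs
    obtain ⟨k1, k2⟩ := aux_deriv_bounds M hd hs.1 (hlt s hs) x
    rw [Real.norm_of_nonneg (mul_nonneg (hφ x) k1)]
    exact mul_le_mul_of_nonneg_left (k2.trans (auxJC_mono M hd hs.1.le hs.2.le h1 x)) (hφ x)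
  have hβ : 0 ≤ β := (ht.1.trans ht.2).le
  constructor
  · exact hasDerivAt_tsum_of_isPreconnected (hC β hβ le_rfl) isOpen_Ioo isPreconnected_Ioo
      (fun x s hs => (aux_deriv M hs.1 (hlt s hs) x).const_mul (φ x)) hb ht
      (hg t ht.1.le ht.2.le) ht
  · exact Summable.of_norm_bounded (hC β hβ le_rfl) (fun x => hb x t ht)

lemma aux_tsumcont {β : ℝ} (h1 : ENNReal.ofReal β < M.βc)
    (φ : (Fin d → ℤ) → ℝ) (hφ : ∀ x, 0 ≤ φ x)
    (hg : Summable fun x => φ x * auxg M β x) :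
    ContinuousOn (fun s => ∑' x, φ x * auxg M s x) (Set.Icc 0 β) := by
  refine continuousOn_tsum (fun x => ?_) hg (fun x s hs => ?_)
  · intro s hs
    have h2 := M.deriv x hs.1 ((ENNReal.ofReal_le_ofReal hs.2).trans_lt h1)
    exact (continuousWithinAt_const.mul h2.continuousWithinAt).mono (fun y hy => hy.1)
  · rw [Real.norm_of_nonneg (mul_nonneg (hφ x) (auxg_nonneg M s x))]
    exact mul_le_mul_of_nonneg_left (auxg_mono M hs.1 hs.2 h1 x) (hφ x)

lemma aux_main (hd : 0 < d) (hc : 0 < c₀) (a b e : ℝ) (ha : 0 ≤ a) (hab : a ≤ b)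
    (hb : ENNReal.ofReal b < M.βc) (he0 : 0 ≤ e)
    (hE : ∀ t ∈ Set.Ioo a b, (∑' x, M.H t x) +
      (∑' x, sqNorm x * M.H t x) / (auxs M + auxm M t / auxX M t) ≤ e) :
    1 - auxX M a / auxX M b ≤ (b - a) * auxX M a ∧
    (b - a) * auxX M a * (1 - e) ≤ 1 - auxX M a / auxX M b ∧
    (∀ q, q = (auxs M + auxm M a / auxX M a) / (auxs M + auxm M b / auxX M b) →
      e ≤ q / 8 → e ≤ 1 / 2 →
      q ≤ 1 ∧ auxX M a / auxX M b ≤ 2 * q ∧ 2 / 3 * q ≤ auxX M a / auxX M b) := by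
  have hlt : ∀ t, t ≤ b → ENNReal.ofReal t < M.βc := fun s hs =>
    (ENNReal.ofReal_le_ofReal hs).trans_lt hb
  have hb0 : 0 ≤ b := ha.trans hab
  have sub : ∀ t ∈ Set.Ioo a b, t ∈ Set.Ioo 0 b := fun t ht => ⟨ha.trans_lt ht.1, ht.2⟩
  have sub' : Set.Icc a b ⊆ Set.Icc 0 b := Set.Icc_subset_Icc_left ha
  have D1 : ∀ t ∈ Set.Ioo a b, HasDerivAt (auxX M) (∑' x, M.G' t x) t ∧
      Summable (M.G' t) := by
    intro t ht
    have := aux_tsumderiv M hd hb (fun _ => 1) (fun _ => zero_le_one)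
      (fun t h0 h1 => by simpa using (auxg_bound M hd h0 (hlt t h1)).1)
      (fun t h0 h1 => by
        simpa using (auxC_sums M hd h0 (hlt t h1) M.K.summable M.K.summable_sq).1.summable)
      (sub t ht)
    simp only [one_mul] at this
    exact this
  have D2 : ∀ t ∈ Set.Ioo a b, HasDerivAt (auxm M) (∑' x, sqNorm x * M.G' t x) t ∧
      Summable (fun x => sqNorm x * M.G' t x) := by
    intro t ht
    exact aux_tsumderiv M hd hb sqNorm aux_sqNorm_nonneg
      (fun t h0 h1 => (auxg_bound M hd h0 (hlt t h1)).2)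
      (fun t h0 h1 => (auxC_sums M hd h0 (hlt t h1) M.K.summable M.K.summable_sq).2.summable)
      (sub t ht)
  have C1 : ContinuousOn (auxX M) (Set.Icc a b) := by
    have := aux_tsumcont M hb (fun _ => 1) (fun _ => zero_le_one)
      (by simpa using (auxg_bound M hd hb0 hb).1)
    simp only [one_mul] at this
    exact this.mono sub'
  have C2 : ContinuousOn (auxm M) (Set.Icc a b) :=
    (aux_tsumcont M hb sqNorm aux_sqNorm_nonneg (auxg_bound M hd hb0 hb).2).mono sub'
  have kS : ∀ t ∈ Set.Ioo a b, Summable (fun x => M.K.J x - M.H t x) ∧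
      Summable (fun x => sqNorm x * (M.K.J x - M.H t x)) ∧
      ∑' x, (M.K.J x - M.H t x) = 1 - ∑' x, M.H t x ∧
      ∑' x, sqNorm x * (M.K.J x - M.H t x) = auxs M - ∑' x, sqNorm x * M.H t x := by
    intro t ht
    obtain ⟨k1, k2⟩ := auxH_bound M hd (sub t ht).1.le (hlt t ht.2.le)
    simp_rw [mul_sub]
    refine ⟨M.K.summable.sub k1, M.K.summable_sq.sub k2, ?_, ?_⟩
    · rw [M.K.summable.tsum_sub k1, M.K.norm_one]
    · rw [M.K.summable_sq.tsum_sub k2, auxs]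
  have I2 : ∀ t ∈ Set.Ioo a b, ∀ x, auxC M (fun x => M.K.J x - M.H t x) t x ≤ M.G' t x :=
    fun t ht x => M.I2 (sub t ht).1.le (hlt t ht.2.le) x
  refine aux_core (auxX M) (auxm M) (fun t => ∑' x, M.G' t x) (fun t => ∑' x, sqNorm x * M.G' t x)
    (fun t => ∑' x, M.H t x) (fun t => ∑' x, sqNorm x * M.H t x) (auxs M) e a b hab
    (auxs_pos M hc) he0
    (fun t ht => auxX_ge_one M hd (sub' ht).1 (hlt t ht.2)) (fun t _ => auxm_nonneg M t) C1 C2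
    (fun t ht => (D1 t ht).1) (fun t ht => (D2 t ht).1)
    (fun t _ => tsum_nonneg (M.H_nonneg t))
    (fun t _ => tsum_nonneg fun x => mul_nonneg (aux_sqNorm_nonneg x) (M.H_nonneg t x))
    hE ?_ ?_ ?_ ?_
  · intro t ht
    have S := (auxC_sums M hd (sub t ht).1.le (hlt t ht.2.le) M.K.summable M.K.summable_sq).1
    have := (D1 t ht).2.tsum_le_tsum (fun x =>
      (aux_deriv_bounds M hd (sub t ht).1 (hlt t ht.2.le) x).2) S.summable
    rw [S.tsum_eq, M.K.norm_one] at this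
    linarith
  · intro t ht
    obtain ⟨k1, k2, k3, k4⟩ := kS t ht
    have S := (auxC_sums M hd (sub t ht).1.le (hlt t ht.2.le) k1 k2).1
    have := S.summable.tsum_le_tsum (I2 t ht) (D1 t ht).2
    rw [S.tsum_eq, k3] at this
    linarith
  · intro t ht
    have S := (auxC_sums M hd (sub t ht).1.le (hlt t ht.2.le) M.K.summable M.K.summable_sq).2
    have := (D2 t ht).2.tsum_le_tsum (fun x => mul_le_mul_of_nonneg_left
      (aux_deriv_bounds M hd (sub t ht).1 (hlt t ht.2.le) x).2 (aux_sqNorm_nonneg x)) S.summable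
    rw [S.tsum_eq, M.K.norm_one] at this
    simp only [auxs] at *
    linarith
  · intro t ht
    obtain ⟨k1, k2, k3, k4⟩ := kS t ht
    have S := (auxC_sums M hd (sub t ht).1.le (hlt t ht.2.le) k1 k2).2
    have := S.summable.tsum_le_tsum (fun x => mul_le_mul_of_nonneg_left
      (I2 t ht x) (aux_sqNorm_nonneg x)) (D2 t ht).2
    rw [S.tsum_eq, k3, k4] at this
    linarith

lemma aux_E (hd : 0 < d) (hc : 0 < c₀) {a b : ℝ} (ha : 0 ≤ a)
    (hb : ENNReal.ofReal b < M.βc) (hE : M.E b ≠ ⊤) :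
    ∀ t ∈ Set.Ioo a b, (∑' x, M.H t x) +
      (∑' x, sqNorm x * M.H t x) / (auxs M + auxm M t / auxX M t) ≤ (M.E b).toReal := by
  intro t ht
  have h0 : 0 ≤ t := ha.trans ht.1.le
  have h1 : ENNReal.ofReal t < M.βc := (ENNReal.ofReal_le_ofReal ht.2.le).trans_lt hb
  have hX := auxX_ge_one M hd h0 h1
  have hm := auxm_nonneg M t
  have hs := auxs_pos M hc
  have hQ : 0 < auxs M + auxm M t / auxX M t := by positivity
  have n1 : 0 ≤ ∑' x, M.H t x := tsum_nonneg (M.H_nonneg t)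
  have n2 : 0 ≤ ∑' x, sqNorm x * M.H t x :=
    tsum_nonneg fun x => mul_nonneg (aux_sqNorm_nonneg x) (M.H_nonneg t x)
  have key : ENNReal.ofReal (∑' x, M.H t x) +
      ENNReal.ofReal (∑' x, sqNorm x * M.H t x) / M.xiSq t ≤ M.E b :=
    le_iSup₂ (f := fun t (_ : t ∈ Set.Icc (0:ℝ) b) => ENNReal.ofReal (∑' x, M.H t x) +
      ENNReal.ofReal (∑' x, sqNorm x * M.H t x) / M.xiSq t) t ⟨h0, ht.2.le⟩
  rw [aux_xiSq M hd h0 h1, ← ENNReal.ofReal_div_of_pos hQ,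
    ← ENNReal.ofReal_add n1 (by positivity)] at key
  exact (ENNReal.ofReal_le_iff_le_toReal hE).1 key

end modelLemmas

lemma aux_lower {d : ℕ} {c₀ : ℝ} (M : Model d c₀) (hd : 0 < d) {a b : ℝ} (ha : 0 ≤ a)
    (hab : a ≤ b) (hb : ENNReal.ofReal b < M.βc) :
    1 - M.chi a / M.chi b ≤ ENNReal.ofReal (b - a) * M.chi a := by
  have hX := auxX_ge_one M hd (ha.trans hab) hb
  have hchi := aux_chi M hd (ha.trans hab) hb
  have hne : M.chi b ≠ 0 := by
    rw [hchi]; simpa using by linarith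
  have hnt : M.chi b ≠ ⊤ := by rw [hchi]; exact ENNReal.ofReal_ne_top
  have hJ : ∑' y, ENNReal.ofReal (M.K.J y) = 1 := by
    rw [← ENNReal.ofReal_tsum_of_nonneg M.K.nonneg M.K.summable, M.K.norm_one]; simp
  have key : M.chi b ≤ M.chi a + ENNReal.ofReal (b - a) * (M.chi a * M.chi b) := by
    have h := ENNReal.tsum_le_tsum (M.I1 ha hab hb)
    rw [ENNReal.tsum_add, ENNReal.tsum_mul_left, ENNReal.tsum_comm] at h
    have e : ∀ p : (Fin d → ℤ) × (Fin d → ℤ),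
        ∑' x, M.G a p.1 * ENNReal.ofReal (M.K.J p.2) * M.G b (x - p.1 - p.2) =
        M.G a p.1 * (ENNReal.ofReal (M.K.J p.2) * M.chi b) := by
      intro p
      rw [ENNReal.tsum_mul_left, mul_assoc]
      congr 2
      rw [← (Equiv.addRight (p.1 + p.2)).tsum_eq, Model.chi]
      apply tsum_congr
      intro x
      congr 1
      simp only [Equiv.coe_addRight]
      abel
    simp_rw [e] at h
    rw [ENNReal.tsum_prod (f := fun p q => M.G a p * (ENNReal.ofReal (M.K.J q) * M.chi b))] at h
    simp_rw [ENNReal.tsum_mul_left, ENNReal.tsum_mul_right, hJ, one_mul] at h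
    exact h
  rw [tsub_le_iff_right]
  have h2 : ENNReal.ofReal (b - a) * M.chi a + M.chi a / M.chi b =
      (M.chi a + ENNReal.ofReal (b - a) * (M.chi a * M.chi b)) / M.chi b := by
    rw [ENNReal.add_div, ← mul_assoc, ENNReal.mul_div_cancel_right hne hnt, add_comm]
  rw [h2, ENNReal.le_div_iff_mul_le (Or.inl hne) (Or.inl hnt), one_mul]
  exact key

/-- bounds on `Z_{β',β}` (`prop:Zbd`). -/
theorem statement15 (d : ℕ) (hd : 2 < d) (c₀ : ℝ) (hc₀ : c₀ ∈ Set.Ioc (0:ℝ) 1)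
    (M : Model d c₀) (β' β : ℝ) (hβ'0 : 0 ≤ β') (hβ'β : β' ≤ β)
    (hβ : ENNReal.ofReal β < M.βc) :
    ((1 - M.chi β' / M.chi β ≤ ENNReal.ofReal (β - β') * M.chi β') ∧
      (M.E β < 1 → ENNReal.ofReal (β - β') * M.chi β' ≤
        (1 - M.chi β' / M.chi β) / (1 - M.E β))) ∧
    (M.E β ≤ M.chi β' / M.chi β / 4 →
      1 - M.chi β' / M.chi β ≤ ENNReal.ofReal (β - β') * M.chi β' ∧
      ENNReal.ofReal (β - β') * M.chi β' ≤ 1 - M.chi β' / M.chi β / 2) ∧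
    (M.E β ≤ min (ENNReal.ofReal ((M.xi β' / M.xi β) ^ 2) / 8) (1/2) →
      1 - 2 * ENNReal.ofReal ((M.xi β' / M.xi β) ^ 2) ≤
          ENNReal.ofReal (β - β') * M.chi β' ∧
      ENNReal.ofReal (β - β') * M.chi β' ≤
          1 - ENNReal.ofReal ((M.xi β' / M.xi β) ^ 2) / 4) := by
  have hd0 : 0 < d := by omega
  have hc : 0 < c₀ := hc₀.1
  have hβ0 : 0 ≤ β := hβ'0.trans hβ'β
  have hβ' : ENNReal.ofReal β' < M.βc := (ENNReal.ofReal_le_ofReal hβ'β).trans_lt hβ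
  have low := aux_lower M hd0 hβ'0 hβ'β hβ
  have hXa := auxX_ge_one M hd0 hβ'0 hβ'
  have hXb := auxX_ge_one M hd0 hβ0 hβ
  have ca := aux_chi M hd0 hβ'0 hβ'
  have cb := aux_chi M hd0 hβ0 hβ
  have hs := auxs_pos M hc
  have hma := auxm_nonneg M β'
  have hmb := auxm_nonneg M β
  have hQa : 0 < auxs M + auxm M β' / auxX M β' := by positivity
  have hQb : 0 < auxs M + auxm M β / auxX M β := by positivity
  have hZ : ENNReal.ofReal (β - β') * M.chi β' = ENNReal.ofReal ((β - β') * auxX M β') := by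
    rw [ca, ENNReal.ofReal_mul (by linarith)]
  have hZ0 : 0 ≤ (β - β') * auxX M β' := mul_nonneg (by linarith) (by linarith)
  have hr : M.chi β' / M.chi β = ENNReal.ofReal (auxX M β' / auxX M β) := by
    rw [ca, cb, ENNReal.ofReal_div_of_pos (by linarith)]
  have hr0 : 0 < auxX M β' / auxX M β := by positivity
  have hXm : auxX M β' ≤ auxX M β :=
    (auxg_bound M hd0 hβ'0 hβ').1.tsum_le_tsum (auxg_mono M hβ'0 hβ'β hβ)
      (auxg_bound M hd0 hβ0 hβ).1
  have hr1 : auxX M β' / auxX M β ≤ 1 := (div_le_one (by positivity)).2 hXm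
  have one_sub : ∀ x : ℝ, 0 ≤ x → (1 : ℝ≥0∞) - ENNReal.ofReal x = ENNReal.ofReal (1 - x) := by
    intro x hx
    rw [ENNReal.ofReal_sub _ hx, ENNReal.ofReal_one]
  have main : M.E β ≠ ⊤ → _ := fun h => aux_main M hd0 hc β' β (M.E β).toReal hβ'0 hβ'β hβ
    ENNReal.toReal_nonneg (aux_E M hd0 hc hβ'0 hβ h)
  refine ⟨⟨low, ?_⟩, ?_, ?_⟩
  · intro hE
    have hEt : M.E β ≠ ⊤ := (hE.trans ENNReal.one_lt_top).ne
    obtain ⟨-, up, -⟩ := main hEt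
    have he : (M.E β).toReal < 1 := by
      rw [← ENNReal.toReal_one]
      exact (ENNReal.toReal_lt_toReal hEt ENNReal.one_ne_top).2 hE
    rw [hZ, hr, ← ENNReal.ofReal_toReal hEt, one_sub _ hr0.le, one_sub _ ENNReal.toReal_nonneg,
      ← ENNReal.ofReal_div_of_pos (by linarith)]
    apply ENNReal.ofReal_le_ofReal
    rw [le_div_iff₀ (by linarith)]
    exact up
  · intro hE
    refine ⟨low, ?_⟩
    have h4 : M.chi β' / M.chi β / 4 = ENNReal.ofReal (auxX M β' / auxX M β / 4) := by
      rw [hr, ENNReal.ofReal_div_of_pos (by norm_num : (0:ℝ) < 4)]; simp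
    have h2 : M.chi β' / M.chi β / 2 = ENNReal.ofReal (auxX M β' / auxX M β / 2) := by
      rw [hr, ENNReal.ofReal_div_of_pos (by norm_num : (0:ℝ) < 2)]; simp
    rw [h4] at hE
    have hEt : M.E β ≠ ⊤ := ne_top_of_le_ne_top ENNReal.ofReal_ne_top hE
    obtain ⟨-, up, -⟩ := main hEt
    have he := ENNReal.toReal_le_of_le_ofReal (by positivity) hE
    rw [hZ, h2, one_sub _ (by positivity)]
    apply ENNReal.ofReal_le_ofReal
    generalize auxX M β' / auxX M β = r at *
    generalize (β - β') * auxX M β' = Z at *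
    generalize (M.E β).toReal = e at *
    by_contra hcon
    push Not at hcon
    nlinarith [mul_lt_mul_of_pos_right hcon (by linarith : 0 < 1 - e)]
  · intro hE
    have hq : (M.xi β' / M.xi β) ^ 2 = (auxs M + auxm M β' / auxX M β') /
        (auxs M + auxm M β / auxX M β) := by
      unfold Model.xi
      rw [aux_xiSq M hd0 hβ'0 hβ', aux_xiSq M hd0 hβ0 hβ, ENNReal.toReal_ofReal hQa.le,
        ENNReal.toReal_ofReal hQb.le, div_pow, Real.sq_sqrt hQa.le, Real.sq_sqrt hQb.le]
    have hq0 : 0 < (M.xi β' / M.xi β) ^ 2 := by rw [hq]; positivity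
    generalize (M.xi β' / M.xi β) ^ 2 = q at *
    have h8 : ENNReal.ofReal q / 8 = ENNReal.ofReal (q / 8) := by
      rw [ENNReal.ofReal_div_of_pos (by norm_num)]; simp
    have h4 : ENNReal.ofReal q / 4 = ENNReal.ofReal (q / 4) := by
      rw [ENNReal.ofReal_div_of_pos (by norm_num)]; simp
    have hh : (1 / 2 : ℝ≥0∞) = ENNReal.ofReal (1 / 2) := by
      rw [ENNReal.ofReal_div_of_pos (by norm_num)]; simp
    have h2 : 2 * ENNReal.ofReal q = ENNReal.ofReal (2 * q) := by
      rw [ENNReal.ofReal_mul (by norm_num)]; simp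
    rw [h8, hh] at hE
    have hE1 := hE.trans (min_le_left _ _)
    have hE2 := hE.trans (min_le_right _ _)
    have hEt : M.E β ≠ ⊤ := ne_top_of_le_ne_top ENNReal.ofReal_ne_top hE1
    obtain ⟨lo, up, rest⟩ := main hEt
    have he1 := ENNReal.toReal_le_of_le_ofReal (by positivity) hE1
    have he2 := ENNReal.toReal_le_of_le_ofReal (by positivity) hE2
    obtain ⟨q1, r1, r2⟩ := rest q hq he1 he2
    rw [hZ, h2, h4, one_sub _ (by positivity), one_sub _ (by positivity)]
    refine ⟨ENNReal.ofReal_le_ofReal (by linarith), ENNReal.ofReal_le_ofReal ?_⟩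
    clear hq rest main
    generalize auxX M β' / auxX M β = r at *
    generalize (β - β') * auxX M β' = Z at *
    generalize (M.E β).toReal = e at *
    by_contra hcon
    push Not at hcon
    nlinarith [mul_lt_mul_of_pos_right hcon (by linarith : 0 < 1 - e)]
end
end
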